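/- arXiv:2402.08484 — 5 statements merged into one kernel-verified Lean document; each statement's English description precedes it below -/
import Mathlib

section
/- (KKM lemma.) For every integer n ≥ 1 and every KKM covering (C_1,…,C_n) of the standard simplex Δ_{n−1}, there exists a point x ∈ Δ_{n−1} such that x ∈ C_i for every i ∈ {1,…,n}. -/
/-!
The proof replaces triangulations by Scarf's primitive sets. Let `V` be a finite set with
injective rank functions `r i : V → ℕ`, one for each colour `i ∈ I`. A set `A ⊆ V` is *dominant*
if no `x ∈ V` satisfies `min_A r i < r i x` for all `i` simultaneously. Dominant sets with `|I|`
elements play the role of the full-dimensional simplices of a triangulation: by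
`even_card_completions`, an "inner" set with `|I| - 1` elements is contained in an even number
(zero or two) of them. For `V = T ⊕ I`, where the extra points `inr i` are lowest in the
`i`-th order and above all of `T` in the others, the only exceptional set relevant to the count is
`{inr i | i ≠ i₀}`. Sperner's door-counting argument (`exists_colorful`) then gives, for every
colouring of `T`, a dominant set carrying all the colours (`scarf`).

For the KKM lemma, let `d i x` be the distance from `x` to `C i` and `D = ∑ i, d i`. On the
simplex `∑ i, D x * x i = ∑ i, d i x`, so every grid point with denominator `k` can be coloured by
some `i` with `D x * x i ≤ d i x`. A fully coloured dominant set has diameter `O(1 / k)`, and a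
compactness argument produces a point `x` of the simplex with `D x * x i ≤ d i x` for all `i`,
hence with equality for all `i`. Some `i` with `x i ≠ 0` has `x ∈ C i` by the covering hypothesis,
so `D x = 0` and `x` lies in every `C i`.
-/

/-- The face of the standard simplex spanned by the basis vectors indexed by `S`. -/
def faceOf {n : ℕ} (S : Finset (Fin n)) : Set (Fin n → ℝ) :=
  convexHull ℝ {x | ∃ i ∈ S, x = Pi.single i (1 : ℝ)}

/-- A KKM covering of the standard simplex: a family of closed sets such that every face
`F_S` is covered by the sets indexed by `S`. -/
def IsKKMCovering {n : ℕ} (C : Fin n → Set (Fin n → ℝ)) : Prop :=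
  (∀ i, IsClosed (C i)) ∧
    ∀ S : Finset (Fin n), S.Nonempty → faceOf S ⊆ ⋃ i ∈ S, C i

/-! ### Dominant sets -/

/-- `A` is dominant for the rank functions `r` if every `x` is, in at least one of the orders,
below all elements of `A`. -/
def Dominant {I V : Type*} (r : I → V → ℕ) (A : Finset V) : Prop :=
  ∀ x, ∃ i, ∀ y ∈ A, r i x ≤ r i y

/-- A surjection from a set with one more element than its target identifies exactly one pair. -/
lemma exists_unique_collision {I V : Type*} [Fintype I] [DecidableEq I] [DecidableEq V]
    (B : Finset V) (m : I → V) (hcard : B.card + 1 = Fintype.card I)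
    (hm : ∀ i, m i ∈ B) (hsurj : ∀ y ∈ B, ∃ i, m i = y) :
    ∃ a b, a ≠ b ∧ m a = m b ∧
      ∀ d, (∀ y ∈ B, ∃ i, i ≠ d ∧ m i = y) ↔ (d = a ∨ d = b) := by
  obtain ⟨a, -, b, -, hab, hmab⟩ := Finset.exists_ne_map_eq_of_card_lt_of_maps_to
    (s := Finset.univ) (t := B) (f := m) (by rw [Finset.card_univ]; omega) (fun i _ => hm i)
  refine ⟨a, b, hab, hmab, fun d => ⟨fun hd => ?_, ?_⟩⟩
  · by_contra hne
    push Not at hne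
    -- Otherwise `m` would still map onto `B` after removing both `d` and `a`.
    have hsub : B ⊆ ((Finset.univ.erase d).erase a).image m := by
      intro y hy
      obtain ⟨i, hid, rfl⟩ := hd y hy
      by_cases hia : i = a
      · subst hia
        exact Finset.mem_image.2 ⟨b, by simp [hab.symm, hne.2.symm], hmab.symm⟩
      · exact Finset.mem_image.2 ⟨i, by simp [hia, hid], rfl⟩
    have h1 := (Finset.card_le_card hsub).trans Finset.card_image_le
    have h2 : ((Finset.univ.erase d).erase a).card + 1 = (Finset.univ.erase d).card :=
      Finset.card_erase_add_one (by simp [hne.1.symm])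
    have h3 : (Finset.univ.erase d).card + 1 = (Finset.univ : Finset I).card :=
      Finset.card_erase_add_one (by simp)
    rw [Finset.card_univ] at h3
    omega
  · rintro (rfl | rfl) y hy
    · obtain ⟨i, rfl⟩ := hsurj y hy
      by_cases hi : i = d
      · exact ⟨b, hab.symm, by rw [hi, hmab]⟩
      · exact ⟨i, hi, rfl⟩
    · obtain ⟨i, rfl⟩ := hsurj y hy
      by_cases hi : i = d
      · exact ⟨a, hab, by rw [hi, hmab]⟩
      · exact ⟨i, hi, rfl⟩

/-- A set with `|I| - 1` elements extends in an even number of ways to a dominant set with `|I|`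
elements, provided that for each `d` some point exceeds the minimum of `B` in all orders except
possibly the `d`-th. In the nontrivial case there are exactly two extensions: the minima of `B`
coincide for a single pair of orders `a, b`, and for `d ∈ {a, b}` the new point is the `d`-largest
among the points exceeding the minimum of `B` in all orders except possibly the `d`-th. -/
lemma even_card_completions {I V : Type*} [Fintype I] [Fintype V]
    [DecidableEq I] [DecidableEq V] (r : I → V → ℕ) (hr : ∀ i, Function.Injective (r i))
    (B : Finset V) (hB : B.Nonempty) (hcard : B.card + 1 = Fintype.card I)
    (hX : ∀ d, ∃ x, ∀ i, i ≠ d → ∃ y ∈ B, r i y < r i x)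
    [DecidablePred fun v => v ∉ B ∧ Dominant r (insert v B)] :
    Even (Finset.univ.filter fun v => v ∉ B ∧ Dominant r (insert v B)).card := by
  by_cases hdom : Dominant r B
  swap
  · rw [Finset.filter_false_of_mem]
    · simp
    · rintro v - ⟨-, hv⟩
      refine hdom fun x => ?_
      obtain ⟨i, hi⟩ := hv x
      exact ⟨i, fun y hy => hi y (Finset.mem_insert_of_mem hy)⟩
  have hmin : ∀ i, ∃ y ∈ B, ∀ z ∈ B, r i y ≤ r i z := fun i => B.exists_min_image (r i) hB
  choose m hmB hmle using hmin
  have hmeq : ∀ i, ∀ y ∈ B, (∀ z ∈ B, r i y ≤ r i z) → m i = y := fun i y hy h =>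
    hr i (le_antisymm (hmle i y hy) (h _ (hmB i)))
  have hsurj : ∀ y ∈ B, ∃ i, m i = y := by
    intro y hy
    obtain ⟨i, hi⟩ := hdom y
    exact ⟨i, hmeq i y hy hi⟩
  obtain ⟨a, b, hab, -, hd⟩ := exists_unique_collision B m hcard hmB hsurj
  have hbest : ∀ d, ∃ v, (∀ i, i ≠ d → r i (m i) < r i v) ∧
      ∀ z, (∀ i, i ≠ d → r i (m i) < r i z) → r d z ≤ r d v := by
    intro d
    obtain ⟨x, hx⟩ := hX d
    obtain ⟨v, hv, hmax⟩ := (Finset.univ.filter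
      fun z => ∀ i, i ≠ d → r i (m i) < r i z).exists_max_image (r d) ⟨x, by
        simp only [Finset.mem_filter, Finset.mem_univ, true_and]
        intro i hi
        obtain ⟨y, hy, hlt⟩ := hx i hi
        exact (hmle i y hy).trans_lt hlt⟩
    simp only [Finset.mem_filter, Finset.mem_univ, true_and] at hv hmax
    exact ⟨v, hv, hmax⟩
  choose w hw hwmax using hbest
  have hnot : ∀ v, ¬ ∀ i, r i (m i) < r i v := by
    intro v hv
    obtain ⟨i, hi⟩ := hdom v
    exact absurd (hi _ (hmB i)) (not_le.2 (hv i))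
  have hne : w a ≠ w b := by
    intro h
    refine hnot (w a) fun i => ?_
    by_cases hi : i = a
    · rw [h]
      exact hw b i (by rw [hi]; exact hab)
    · exact hw a i hi
  have hgood : ∀ d, (d = a ∨ d = b) → w d ∉ B ∧ Dominant r (insert (w d) B) := by
    intro d hdab
    constructor
    · intro hmem
      obtain ⟨i, hid, hi⟩ := (hd d).2 hdab _ hmem
      have := hw d i hid
      rw [hi] at this
      exact lt_irrefl _ this
    · intro z
      by_contra hz
      push Not at hz
      have hzX : ∀ i, i ≠ d → r i (m i) < r i z := by
        intro i hi
        obtain ⟨y, hy, hlt⟩ := hz i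
        rcases Finset.mem_insert.1 hy with rfl | hy
        · exact (hw d i hi).trans hlt
        · exact (hmle i y hy).trans_lt hlt
      have hzle := hwmax d z hzX
      obtain ⟨y, hy, hlt⟩ := hz d
      rcases Finset.mem_insert.1 hy with rfl | hy
      · omega
      · refine hnot (w d) fun i => ?_
        by_cases hi : i = d
        · rw [hi]
          have := hmle d y hy
          omega
        · exact hw d i hi
  have hset : (Finset.univ.filter fun v => v ∉ B ∧ Dominant r (insert v B)) = {w a, w b} := by
    ext v
    simp only [Finset.mem_filter, Finset.mem_univ, true_and, Finset.mem_insert,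
      Finset.mem_singleton]
    constructor
    · rintro ⟨hvB, hv⟩
      obtain ⟨d, hdv⟩ := hv v
      have hlt : ∀ y ∈ B, r d v < r d y := by
        intro y hy
        refine lt_of_le_of_ne (hdv y (Finset.mem_insert_of_mem hy)) fun h => hvB ?_
        rw [hr d h]
        exact hy
      -- Each element of `B` must remain a minimum of `insert v B`, in an order other than `d`.
      have hcov : ∀ y ∈ B, ∃ i, i ≠ d ∧ m i = y ∧ r i y ≤ r i v := by
        intro y hy
        obtain ⟨i, hi⟩ := hv y
        have hiv := hi v (Finset.mem_insert_self _ _)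
        refine ⟨i, ?_, hmeq i y hy fun z hz => hi z (Finset.mem_insert_of_mem hz), hiv⟩
        rintro rfl
        exact absurd (hlt y hy) (not_lt.2 hiv)
      have hdab := (hd d).1 fun y hy => by
        obtain ⟨i, h1, h2, -⟩ := hcov y hy
        exact ⟨i, h1, h2⟩
      have hinj : Set.InjOn m (Finset.univ.erase d : Finset I) := by
        refine Finset.injOn_of_card_image_eq ?_
        have himg : (Finset.univ.erase d).image m = B := by
          ext y
          constructor
          · intro hy
            obtain ⟨i, -, rfl⟩ := Finset.mem_image.1 hy
            exact hmB i
          · intro hy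
            obtain ⟨i, h1, h2, -⟩ := hcov y hy
            exact Finset.mem_image.2 ⟨i, by simp [h1], h2⟩
        have h3 : (Finset.univ.erase d).card + 1 = (Finset.univ : Finset I).card :=
          Finset.card_erase_add_one (by simp)
        rw [Finset.card_univ] at h3
        rw [himg]
        omega
      have hvX : ∀ i, i ≠ d → r i (m i) < r i v := by
        intro i hi
        obtain ⟨j, h1, h2, h3⟩ := hcov (m i) (hmB i)
        have hji : j = i := hinj (by simp [h1]) (by simp [hi]) h2
        rw [hji] at h3
        refine lt_of_le_of_ne h3 fun h => hvB ?_
        rw [← hr i h]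
        exact hmB i
      have hwv : r d (w d) ≤ r d v := by
        obtain ⟨i, hi⟩ := hv (w d)
        by_cases hid : i = d
        · rw [hid] at hi
          exact hi v (Finset.mem_insert_self _ _)
        · exact absurd (hi _ (Finset.mem_insert_of_mem (hmB i))) (not_le.2 (hw d i hid))
      have hvw : v = w d := hr d (le_antisymm (hwmax d v hvX) hwv)
      rcases hdab with rfl | rfl
      · exact Or.inl hvw
      · exact Or.inr hvw
    · rintro (rfl | rfl)
      · exact hgood a (Or.inl rfl)
      · exact hgood b (Or.inr rfl)
  rw [hset, Finset.card_pair hne]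
  exact even_two

/-! ### Door counting -/

/-- The number of facets of `A` carrying exactly the colours other than `i₀` is odd if and only if
`A` carries all colours. -/
lemma odd_card_doors {I V : Type*} [Fintype I] [DecidableEq I] [DecidableEq V]
    (c : V → I) (i₀ : I) (A : Finset V) (hA : A.card = Fintype.card I) :
    Odd (A.filter fun v => (A.erase v).image c = Finset.univ.erase i₀).card ↔
      A.image c = Finset.univ := by
  have hcardU : ∀ d : I, (Finset.univ.erase d).card + 1 = Fintype.card I := fun d => by
    rw [Finset.card_erase_add_one (by simp), Finset.card_univ]
  constructor
  · intro hodd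
    by_contra hcol
    obtain ⟨v, hv⟩ := Finset.card_pos.1 hodd.pos
    obtain ⟨hvA, hvc⟩ := Finset.mem_filter.1 hv
    have hinj : Set.InjOn c (A.erase v : Finset V) := by
      refine Finset.injOn_of_card_image_eq ?_
      have := Finset.card_erase_add_one hvA
      have := hcardU i₀
      rw [hvc]
      omega
    have himg : ∀ u ∈ A, A.image c = insert (c u) ((A.erase u).image c) := fun u hu => by
      rw [← Finset.image_insert, Finset.insert_erase hu]
    have hcv : c v ≠ i₀ := by
      intro h
      apply hcol
      rw [himg v hvA, hvc, h, Finset.insert_erase (by simp)]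
    have hcv' : c v ∈ (A.erase v).image c := by rw [hvc]; simp [hcv]
    obtain ⟨u, hu, huv⟩ := Finset.mem_image.1 hcv'
    obtain ⟨hne, huA⟩ := Finset.mem_erase.1 hu
    have hset : (A.filter fun v => (A.erase v).image c = Finset.univ.erase i₀) = {v, u} := by
      ext t
      simp only [Finset.mem_filter, Finset.mem_insert, Finset.mem_singleton]
      constructor
      · rintro ⟨htA, htc⟩
        by_contra! hcon
        have hinjt : Set.InjOn c (A.erase t : Finset V) := by
          refine Finset.injOn_of_card_image_eq ?_
          have := Finset.card_erase_add_one htA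
          have := hcardU i₀
          rw [htc]
          omega
        exact hne (hinjt (by simp [huA, hcon.2.symm]) (by simp [hvA, hcon.1.symm]) huv)
      · rintro (rfl | rfl)
        · exact ⟨hvA, hvc⟩
        · refine ⟨huA, ?_⟩
          rw [← hvc]
          -- `u` and `v` have the same colour, so removing either gives the same colour set.
          ext j
          simp only [Finset.mem_image, Finset.mem_erase]
          constructor
          · rintro ⟨s, ⟨hs, hsA⟩, rfl⟩
            by_cases hsv : s = v
            · exact ⟨t, ⟨hne, huA⟩, by rw [hsv, huv]⟩
            · exact ⟨s, ⟨hsv, hsA⟩, rfl⟩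
          · rintro ⟨s, ⟨hs, hsA⟩, rfl⟩
            by_cases hst : s = t
            · exact ⟨v, ⟨hne.symm, hvA⟩, by rw [hst, huv]⟩
            · exact ⟨s, ⟨hst, hsA⟩, rfl⟩
    rw [hset, Finset.card_pair hne.symm] at hodd
    exact absurd hodd (by decide)
  · intro hcol
    have hinj : Set.InjOn c (A : Finset V) := by
      refine Finset.injOn_of_card_image_eq ?_
      rw [hcol, Finset.card_univ, hA]
    obtain ⟨v, hvA, hv⟩ := Finset.mem_image.1 (by rw [hcol]; simp : i₀ ∈ A.image c)
    have hset : (A.filter fun v => (A.erase v).image c = Finset.univ.erase i₀) = {v} := by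
      ext t
      simp only [Finset.mem_filter, Finset.mem_singleton]
      constructor
      · rintro ⟨htA, htc⟩
        by_contra hne
        have : c v ∈ (A.erase t).image c :=
          Finset.mem_image_of_mem _ (by simp [hvA, Ne.symm hne])
        rw [htc, hv] at this
        simp at this
      · rintro rfl
        refine ⟨hvA, ?_⟩
        ext j
        simp only [Finset.mem_image, Finset.mem_erase, Finset.mem_univ, and_true]
        constructor
        · rintro ⟨s, ⟨hs, hsA⟩, rfl⟩ h
          exact hs (hinj hsA hvA (h.trans hv.symm))
        · intro hj
          obtain ⟨s, hsA, rfl⟩ := Finset.mem_image.1 (by rw [hcol]; simp : j ∈ A.image c)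
          exact ⟨s, ⟨fun h => hj (by rw [h, hv]), hsA⟩, rfl⟩
    rw [hset]
    simp

/-- Sperner's parity argument in abstract form: the rooms are the `|I|`-element sets satisfying
`P`, the doors are the `(|I| - 1)`-element sets with all colours except `i₀`, and `B₀` is the only
door contained in an odd number of rooms. Then some room has all colours. -/
lemma exists_colorful {I V : Type*} [Fintype I] [Fintype V] [DecidableEq I] [DecidableEq V]
    (c : V → I) (i₀ : I) (P : Finset V → Prop) [DecidablePred P] (B₀ : Finset V)
    (hB₀ : B₀.card + 1 = Fintype.card I) (hB₀c : B₀.image c = Finset.univ.erase i₀)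
    (hodd : Odd (Finset.univ.filter fun v => v ∉ B₀ ∧ P (insert v B₀)).card)
    (heven : ∀ B : Finset V, B.card + 1 = Fintype.card I → B.image c = Finset.univ.erase i₀ →
      B ≠ B₀ → Even (Finset.univ.filter fun v => v ∉ B ∧ P (insert v B)).card) :
    ∃ A : Finset V, A.card = Fintype.card I ∧ P A ∧ A.image c = Finset.univ := by
  by_contra! hcon
  let rooms : Finset (Finset V) := Finset.univ.filter fun A => A.card = Fintype.card I ∧ P A
  let doors : Finset (Finset V) := Finset.univ.filter fun B =>
    B.card + 1 = Fintype.card I ∧ B.image c = Finset.univ.erase i₀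
  -- Both sides count the incident pairs of a room and a door.
  have hcount : ∑ A ∈ rooms,
      (A.filter fun v => (A.erase v).image c = Finset.univ.erase i₀).card =
      ∑ B ∈ doors, (Finset.univ.filter fun v => v ∉ B ∧ P (insert v B)).card := by
    rw [← Finset.card_sigma, ← Finset.card_sigma]
    refine Finset.card_bij' (fun p _ => ⟨p.1.erase p.2, p.2⟩) (fun p _ => ⟨insert p.2 p.1, p.2⟩)
      ?_ ?_ ?_ ?_
    · rintro ⟨A, v⟩ h
      simp only [rooms, doors, Finset.mem_sigma, Finset.mem_filter, Finset.mem_univ,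
        true_and] at h ⊢
      obtain ⟨⟨h1, h2⟩, h3, h4⟩ := h
      refine ⟨⟨?_, h4⟩, by simp, ?_⟩
      · rw [Finset.card_erase_add_one h3, h1]
      · rwa [Finset.insert_erase h3]
    · rintro ⟨B, v⟩ h
      simp only [rooms, doors, Finset.mem_sigma, Finset.mem_filter, Finset.mem_univ,
        true_and] at h ⊢
      obtain ⟨⟨h1, h2⟩, h3, h4⟩ := h
      refine ⟨⟨?_, h4⟩, by simp, ?_⟩
      · rw [Finset.card_insert_of_notMem h3, h1]
      · rwa [Finset.erase_insert h3]
    · rintro ⟨A, v⟩ h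
      simp only [Finset.mem_sigma, Finset.mem_filter] at h
      simp [Finset.insert_erase h.2.1]
    · rintro ⟨B, v⟩ h
      simp only [Finset.mem_sigma, Finset.mem_filter] at h
      simp [Finset.erase_insert h.2.2.1]
  have hleft : Even (∑ A ∈ rooms,
      (A.filter fun v => (A.erase v).image c = Finset.univ.erase i₀).card) := by
    refine Finset.even_sum _ fun A hA => ?_
    simp only [rooms, Finset.mem_filter, Finset.mem_univ, true_and] at hA
    rw [← Nat.not_odd_iff_even, odd_card_doors c i₀ A hA.1]
    exact hcon A hA.1 hA.2
  have hmem : B₀ ∈ doors := by simp [doors, hB₀, hB₀c]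
  rw [hcount, ← Finset.add_sum_erase _ _ hmem] at hleft
  have hrest : Even (∑ B ∈ doors.erase B₀,
      (Finset.univ.filter fun v => v ∉ B ∧ P (insert v B)).card) := by
    refine Finset.even_sum _ fun B hB => ?_
    simp only [doors, Finset.mem_erase, Finset.mem_filter, Finset.mem_univ, true_and] at hB
    exact heven B hB.2.1 hB.2.2 hB.1
  exact (Nat.not_even_iff_odd.2 (hodd.add_even hrest)) hleft

/-! ### Scarf's lemma -/

/-- The core of Scarf's lemma on `T ⊕ I`. The hypotheses on `r` say that `inr i` is the lowest
point in the `i`-th order, and lies above all points of `T` in the other orders. -/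
lemma scarf_aux {I T : Type*} [Fintype I] [Fintype T] [Nonempty I] [Nonempty T]
    (r : I → T ⊕ I → ℕ) (hr : ∀ i, Function.Injective (r i))
    (hlow : ∀ i v, r i (Sum.inr i) ≤ r i v)
    (hhigh : ∀ i j x, i ≠ j → r i (Sum.inl x) < r i (Sum.inr j)) (c : T → I) :
    ∃ A : Finset (T ⊕ I), Dominant r A ∧ ∀ i, ∃ v ∈ A, Sum.elim c id v = i := by
  classical
  obtain ⟨i₀⟩ := ‹Nonempty I›
  have hlow' : ∀ i x, r i (Sum.inr i) < r i (Sum.inl x) := fun i x =>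
    lt_of_le_of_ne (hlow i _) fun h => by simpa using hr i h
  have hinr : Function.Injective (Sum.inr : I → T ⊕ I) := Sum.inr_injective
  let B₀ : Finset (T ⊕ I) := (Finset.univ.erase i₀).image Sum.inr
  have hB₀c : B₀.image (Sum.elim c id) = Finset.univ.erase i₀ := by
    simp only [B₀, Finset.image_image]
    ext j
    simp
  have hB₀ : B₀.card + 1 = Fintype.card I := by
    rw [Finset.card_image_of_injective _ hinr, Finset.card_erase_add_one (by simp),
      Finset.card_univ]
  suffices h : ∃ A : Finset (T ⊕ I), A.card = Fintype.card I ∧ Dominant r A ∧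
      A.image (Sum.elim c id) = Finset.univ by
    obtain ⟨A, -, hA, hAc⟩ := h
    refine ⟨A, hA, fun i => ?_⟩
    exact Finset.mem_image.1 (by rw [hAc]; simp)
  refine exists_colorful (Sum.elim c id) i₀ (Dominant r) B₀ hB₀ hB₀c ?_ ?_
  -- The only completion of `B₀` is by the largest element of `T` in the order `i₀`.
  · obtain ⟨x, -, hx⟩ := (Finset.univ : Finset T).exists_max_image (fun t => r i₀ (Sum.inl t))
      Finset.univ_nonempty
    have hset : (Finset.univ.filter fun v => v ∉ B₀ ∧ Dominant r (insert v B₀)) =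
        {Sum.inl x} := by
      ext v
      simp only [Finset.mem_filter, Finset.mem_univ, true_and, Finset.mem_singleton]
      constructor
      · rintro ⟨hv, hdom⟩
        obtain ⟨i, hi⟩ := hdom (Sum.inl x)
        have hii : i = i₀ := by
          by_contra hne
          exact absurd (hi (Sum.inr i) (by simp [B₀, hne])) (not_le.2 (hlow' i x))
        subst hii
        have hvx := hi v (Finset.mem_insert_self _ _)
        rcases v with t | j
        · exact hr i (le_antisymm (hx t (by simp)) hvx)
        · have hj : j = i := by
            by_contra hne
            exact hv (by simp [B₀, hne])
          subst hj
          exact absurd hvx (not_le.2 (hlow' _ _))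
      · rintro rfl
        refine ⟨by simp [B₀], ?_⟩
        rintro (t | j)
        · refine ⟨i₀, fun y hy => ?_⟩
          rcases Finset.mem_insert.1 hy with rfl | hy
          · exact hx t (by simp)
          · simp only [B₀, Finset.mem_image, Finset.mem_erase] at hy
            obtain ⟨j, ⟨hj, -⟩, rfl⟩ := hy
            exact (hhigh i₀ j t hj.symm).le
        · exact ⟨j, fun y _ => hlow j y⟩
    rw [hset]
    simp
  · intro B hB hBc hne
    have hT : ∃ t, Sum.inl t ∈ B := by
      by_contra! hcon
      apply hne
      ext v
      rcases v with t | j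
      · simp [hcon t, B₀]
      · have hj : j ∈ B.image (Sum.elim c id) ↔ Sum.inr j ∈ B := by
          constructor
          · intro h
            obtain ⟨v, hv, hvj⟩ := Finset.mem_image.1 h
            rcases v with t | l
            · exact absurd hv (hcon t)
            · simp only [Sum.elim_inr, id] at hvj
              rwa [← hvj]
          · intro h
            exact Finset.mem_image.2 ⟨_, h, rfl⟩
        rw [← hj, hBc]
        simp [B₀]
    obtain ⟨t, ht⟩ := hT
    exact even_card_completions r hr B ⟨_, ht⟩ hB fun d =>
      ⟨Sum.inr d, fun i hi => ⟨_, ht, hhigh i d t hi⟩⟩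

/-- Scarf's lemma for functions `f i` that need not be injective; ties are broken by an
enumeration of `T`. -/
lemma scarf {n : ℕ} {T : Type*} [Fintype T] [Nonempty T] (hn : 1 ≤ n)
    (f : Fin n → T → ℕ) (c : T → Fin n) :
    ∃ (σ : Finset T) (C : Finset (Fin n)), (∀ i ∈ C, ∃ y ∈ σ, c y = i) ∧
      ∀ x, ∃ i ∈ C, ∀ y ∈ σ, f i x ≤ f i y := by
  classical
  have : Nonempty (Fin n) := ⟨⟨0, hn⟩⟩
  let N := Fintype.card T
  let e : T ≃ Fin N := Fintype.equivFin T
  let M : ℕ := ∑ i, ∑ x, f i x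
  have hM : ∀ i x, f i x ≤ M := fun i x =>
    (Finset.single_le_sum (f := fun x => f i x) (fun _ _ => Nat.zero_le _)
      (Finset.mem_univ x)).trans
    (Finset.single_le_sum (f := fun i => ∑ x, f i x) (fun _ _ => Nat.zero_le _)
      (Finset.mem_univ i))
  let r : Fin n → T ⊕ Fin n → ℕ := fun i =>
    Sum.elim (fun x => 1 + (f i x * N + e x)) (fun j => if j = i then 0 else 1 + (M + 1) * N + j)
  have hlt : ∀ i x, f i x * N + e x < (M + 1) * N := by
    intro i x
    have h1 := (e x).2
    have h2 : f i x * N ≤ M * N := Nat.mul_le_mul_right _ (hM i x)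
    rw [add_mul]
    omega
  have hmono : ∀ i x y, r i (Sum.inl x) ≤ r i (Sum.inl y) → f i x ≤ f i y := by
    intro i x y h
    by_contra! hcon
    have h1 := (e y).2
    have h2 : (f i y + 1) * N ≤ f i x * N := Nat.mul_le_mul_right _ hcon
    simp only [r, Sum.elim_inl] at h
    rw [add_mul] at h2
    omega
  have hr : ∀ i, Function.Injective (r i) := by
    rintro i (x | j) (y | l) h
    · have hf : f i x = f i y := le_antisymm (hmono i x y h.le) (hmono i y x h.ge)
      simp only [r, Sum.elim_inl, hf] at h
      have : (e x : ℕ) = e y := by omega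
      rw [e.injective (Fin.ext this)]
    · have := hlt i x
      simp only [r, Sum.elim_inl, Sum.elim_inr] at h
      split_ifs at h <;> omega
    · have := hlt i y
      simp only [r, Sum.elim_inl, Sum.elim_inr] at h
      split_ifs at h <;> omega
    · simp only [r, Sum.elim_inr] at h
      congr 1
      split_ifs at h with h1 h2 h2
      · rw [h1, h2]
      · omega
      · omega
      · exact Fin.ext (by omega)
  obtain ⟨A, hA, hAc⟩ := scarf_aux r hr (by intro i v; simp [r]) (by
    intro i j x hij
    have := hlt i x
    simp only [r, Sum.elim_inl, Sum.elim_inr, if_neg hij.symm]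
    omega) c
  refine ⟨Finset.univ.filter fun t => Sum.inl t ∈ A,
    Finset.univ.filter fun i => Sum.inr i ∉ A, ?_, ?_⟩
  · intro i hi
    obtain ⟨v, hv, hvi⟩ := hAc i
    rcases v with t | j
    · exact ⟨t, by simp [hv], hvi⟩
    · simp only [Sum.elim_inr, id] at hvi
      subst hvi
      simp [hv] at hi
  · intro x
    obtain ⟨i, hi⟩ := hA (Sum.inl x)
    refine ⟨i, ?_, fun y hy => hmono i x y (hi _ (by simpa using hy))⟩
    simp only [Finset.mem_filter, Finset.mem_univ, true_and]
    intro hmem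
    have := hi _ hmem
    simp [r] at this

/-! ### From the grid to the simplex -/

/-- Scarf's lemma for the grid of nonnegative integer points with coordinate sum `k`: there is
a grid point `y₀` such that each colour `i` occurs on a grid point within `ℓ^∞`-distance `n`
of `y₀`, or the `i`-th coordinate of `y₀` is at most `n`. -/
lemma scarf_grid {n : ℕ} (hn : 1 ≤ n) (k : ℕ) (c : (Fin n → ℕ) → Fin n) :
    ∃ y₀ : Fin n → ℕ, ∑ i, y₀ i = k ∧ ∀ i, y₀ i ≤ n ∨
      ∃ y : Fin n → ℕ, ∑ i, y i = k ∧ c y = i ∧ ∀ j, y j ≤ y₀ j + n ∧ y₀ j ≤ y j + n := by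
  classical
  let T := {x : Fin n → ℕ // x ∈ Finset.piAntidiag Finset.univ k}
  have hT : ∀ x : T, ∑ i, x.1 i = k := fun x => (Finset.mem_piAntidiag.1 x.2).1
  have mkT : ∀ x : Fin n → ℕ, ∑ i, x i = k → x ∈ Finset.piAntidiag Finset.univ k :=
    fun x hx => Finset.mem_piAntidiag.2 ⟨hx, by simp⟩
  let t₀ : T := ⟨Pi.single ⟨0, hn⟩ k, mkT _ (by simp)⟩
  have : Nonempty T := ⟨t₀⟩
  have : Fintype T := inferInstanceAs (Fintype {x // x ∈ Finset.piAntidiag Finset.univ k})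
  obtain ⟨σ, C, hcol, hdom⟩ := scarf hn (fun i (x : T) => x.1 i) (fun x => c x.1)
  obtain ⟨i₁, hi₁, -⟩ := hdom t₀
  obtain ⟨y₀, hy₀, -⟩ := hcol i₁ hi₁
  have hmin : ∀ i, ∃ y ∈ σ, ∀ z ∈ σ, y.1 i ≤ z.1 i := fun i =>
    σ.exists_min_image (fun y => y.1 i) ⟨y₀, hy₀⟩
  choose w hwσ hw using hmin
  -- Otherwise some grid point would exceed the minimum over `σ` in every coordinate of `C`.
  have hkey : k < ∑ i ∈ C, ((w i).1 i + 1) := by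
    by_contra! hle
    let g : Fin n → ℕ := fun i => if i ∈ C then (w i).1 i + 1 else 0
    have hg : ∑ i, g i = ∑ i ∈ C, ((w i).1 i + 1) := by
      simp [g, Finset.sum_ite_mem]
    let x : Fin n → ℕ := fun i => g i + Pi.single (M := fun _ => ℕ) i₁ (k - ∑ i, g i) i
    have hx : ∑ i, x i = k := by
      simp only [x, Finset.sum_add_distrib]
      rw [Finset.sum_pi_single']
      simp only [Finset.mem_univ, if_true]
      omega
    obtain ⟨i, hi, hle⟩ := hdom ⟨x, mkT x hx⟩
    have h1 := hle (w i) (hwσ i)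
    simp only [x, g, if_pos hi] at h1
    omega
  have hCn : C.card ≤ n := by simpa using C.card_le_univ
  have hsum : k < (∑ i ∈ C, (w i).1 i) + n := by
    rw [Finset.sum_add_distrib] at hkey
    simp only [Finset.sum_const, smul_eq_mul, mul_one] at hkey
    omega
  have hinC : ∀ y ∈ σ, ∀ i ∈ C, y.1 i ≤ (w i).1 i + n := by
    intro y hy i hi
    have h1 : ∑ j ∈ C, y.1 j ≤ k := by
      exact (Finset.sum_le_sum_of_subset (Finset.subset_univ _)).trans (hT y).le
    rw [← Finset.add_sum_erase _ _ hi] at h1 hsum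
    have h2 : ∑ j ∈ C.erase i, (w j).1 j ≤ ∑ j ∈ C.erase i, y.1 j :=
      Finset.sum_le_sum fun j _ => hw j y hy
    omega
  have houtC : ∀ y ∈ σ, ∀ i ∉ C, y.1 i ≤ n := by
    intro y hy i hi
    have h1 : ∑ j ∈ insert i C, y.1 j ≤ k := by
      exact (Finset.sum_le_sum_of_subset (Finset.subset_univ _)).trans (hT y).le
    rw [Finset.sum_insert hi] at h1
    have h2 : ∑ j ∈ C, (w j).1 j ≤ ∑ j ∈ C, y.1 j :=
      Finset.sum_le_sum fun j _ => hw j y hy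
    omega
  have hclose : ∀ y ∈ σ, ∀ z ∈ σ, ∀ j, y.1 j ≤ z.1 j + n := by
    intro y hy z hz j
    by_cases hj : j ∈ C
    · have := hinC y hy j hj
      have := hw j z hz
      omega
    · have := houtC y hy j hj
      omega
  refine ⟨y₀.1, hT y₀, fun i => ?_⟩
  by_cases hi : i ∈ C
  · obtain ⟨y, hy, hyc⟩ := hcol i hi
    exact Or.inr ⟨y.1, hT y, hyc, fun j => ⟨hclose y hy y₀ hy₀ j, hclose y₀ hy₀ y hy j⟩⟩
  · exact Or.inl (houtC y₀ hy₀ i hi)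

/-- A KKM-type statement with the boundary condition of the opposite kind: the closed sets `K i`
cover the simplex and `K i` contains the hyperplane `x i = 0`. -/
lemma exists_mem_of_dual_covering {n : ℕ} (hn : 1 ≤ n) (K : Fin n → Set (Fin n → ℝ))
    (hK : ∀ i, IsClosed (K i)) (h0 : ∀ i x, x i = 0 → x ∈ K i)
    (hcov : ∀ x ∈ stdSimplex ℝ (Fin n), ∃ i, x ∈ K i) :
    ∃ x ∈ stdSimplex ℝ (Fin n), ∀ i, x ∈ K i := by
  classical
  have hKne : ∀ i, (K i).Nonempty := fun i => ⟨0, h0 i 0 rfl⟩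
  let F : (Fin n → ℝ) → ℝ := fun x => ∑ i, Metric.infDist x (K i)
  have hF : Continuous F := continuous_finsetSum _ fun i _ => Metric.continuous_infDist_pt _
  obtain ⟨x, hx, hmin⟩ := (isCompact_stdSimplex ℝ (Fin n)).exists_isMinOn
    ⟨_, single_mem_stdSimplex ℝ (⟨0, hn⟩ : Fin n)⟩ hF.continuousOn
  have hF0 : ∀ y, 0 ≤ F y := fun y => Finset.sum_nonneg fun _ _ => Metric.infDist_nonneg
  have hbound : ∀ k : ℕ, F x ≤ (n * n : ℝ) / ((k : ℝ) + 1) := by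
    intro k
    have hkpos : (0 : ℝ) < (k : ℝ) + 1 := by positivity
    let p : (Fin n → ℕ) → Fin n → ℝ := fun y i => (y i : ℝ) / ((k : ℝ) + 1)
    have hp : ∀ y : Fin n → ℕ, ∑ i, y i = k + 1 → p y ∈ stdSimplex ℝ (Fin n) := by
      intro y hy
      refine ⟨fun i => by positivity, ?_⟩
      simp only [p]
      rw [← Finset.sum_div, div_eq_one_iff_eq hkpos.ne']
      exact_mod_cast hy
    have hc : ∀ y : Fin n → ℕ, ∃ i, ∑ i, y i = k + 1 → p y ∈ K i := by
      intro y
      by_cases hy : ∑ i, y i = k + 1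
      · obtain ⟨i, hi⟩ := hcov _ (hp y hy)
        exact ⟨i, fun _ => hi⟩
      · exact ⟨⟨0, hn⟩, fun h => absurd h hy⟩
    choose c hc using hc
    obtain ⟨y₀, hy₀, hy⟩ := scarf_grid hn (k + 1) c
    refine (hmin (hp y₀ hy₀)).trans ?_
    have hterm : ∀ i, Metric.infDist (p y₀) (K i) ≤ (n : ℝ) / ((k : ℝ) + 1) := by
      intro i
      rcases hy i with hle | ⟨y, hysum, hyc, hclose⟩
      · refine (Metric.infDist_le_dist_of_mem
          (h0 i (Function.update (p y₀) i 0) (by simp))).trans ?_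
        rw [dist_pi_le_iff (by positivity)]
        intro j
        by_cases hj : j = i
        · subst hj
          have hle' : (y₀ j : ℝ) ≤ n := by exact_mod_cast hle
          simp only [Function.update_self, p, Real.dist_eq, sub_zero]
          rw [abs_of_nonneg (by positivity)]
          gcongr
        · simp only [Function.update_of_ne hj, dist_self]
          positivity
      · have hmem : p y ∈ K i := by
          rw [← hyc]
          exact hc y hysum
        refine (Metric.infDist_le_dist_of_mem hmem).trans ?_
        rw [dist_pi_le_iff (by positivity)]
        intro j
        simp only [p, Real.dist_eq]
        rw [← sub_div, abs_div, abs_of_pos hkpos]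
        gcongr
        have h1 : (y j : ℝ) ≤ y₀ j + n := by exact_mod_cast (hclose j).1
        have h2 : (y₀ j : ℝ) ≤ y j + n := by exact_mod_cast (hclose j).2
        rw [abs_le]
        constructor <;> linarith
    calc F (p y₀) ≤ ∑ _i : Fin n, (n : ℝ) / ((k : ℝ) + 1) :=
          Finset.sum_le_sum fun i _ => hterm i
      _ = (n * n : ℝ) / ((k : ℝ) + 1) := by
          simp [mul_div_assoc]
  have hlim : Filter.Tendsto (fun k : ℕ => (n * n : ℝ) / ((k : ℝ) + 1)) Filter.atTop
      (nhds 0) := by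
    have := (tendsto_one_div_add_atTop_nhds_zero_nat (𝕜 := ℝ)).const_mul (n * n : ℝ)
    simpa [div_eq_mul_inv] using this
  have hFx : F x = 0 := le_antisymm (ge_of_tendsto' hlim hbound) (hF0 x)
  refine ⟨x, hx, fun i => ?_⟩
  rw [(hK i).mem_iff_infDist_zero (hKne i)]
  exact (Finset.sum_eq_zero_iff_of_nonneg fun _ _ => Metric.infDist_nonneg).1 hFx i
    (Finset.mem_univ i)

lemma mem_faceOf_support {n : ℕ} (x : Fin n → ℝ) (hx : x ∈ stdSimplex ℝ (Fin n)) :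
    x ∈ faceOf (Finset.univ.filter fun i => x i ≠ 0) := by
  classical
  have hsum : ∑ i ∈ Finset.univ.filter (fun i => x i ≠ 0), x i = 1 := by
    rw [Finset.sum_filter_ne_zero, hx.2]
  have hmem : ∑ i ∈ Finset.univ.filter (fun i => x i ≠ 0), x i • (Pi.single i (1 : ℝ) : Fin n → ℝ)
      ∈ faceOf (Finset.univ.filter fun i => x i ≠ 0) :=
    (convex_convexHull ℝ _).sum_mem (fun i _ => hx.1 i) hsum
      fun i hi => subset_convexHull ℝ _ ⟨i, hi, rfl⟩
  convert hmem using 1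
  ext j
  simp [Finset.sum_apply, Pi.single_apply]

/-- The KKM lemma: every KKM covering of the standard simplex has a point lying in all sets. -/
theorem kkm_lemma (n : ℕ) (hn : 1 ≤ n) (C : Fin n → Set (Fin n → ℝ))
    (hC : IsKKMCovering C) :
    ∃ x ∈ stdSimplex ℝ (Fin n), ∀ i, x ∈ C i := by
  classical
  obtain ⟨hclosed, hcov⟩ := hC
  have hne : ∀ i, (C i).Nonempty := by
    intro i
    have h := hcov {i} (by simp) (subset_convexHull ℝ _ ⟨i, by simp, rfl⟩)
    simp only [Finset.mem_singleton, Set.iUnion_iUnion_eq_left] at h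
    exact ⟨_, h⟩
  let d : Fin n → (Fin n → ℝ) → ℝ := fun i x => Metric.infDist x (C i)
  let D : (Fin n → ℝ) → ℝ := fun x => ∑ i, d i x
  have hd : ∀ i, Continuous (d i) := fun i => Metric.continuous_infDist_pt _
  have hD : Continuous D := continuous_finsetSum _ fun i _ => hd i
  have hd0 : ∀ i x, 0 ≤ d i x := fun i x => Metric.infDist_nonneg
  have hsum : ∀ x ∈ stdSimplex ℝ (Fin n), ∑ i, D x * x i = ∑ i, d i x := by
    intro x hx
    rw [← Finset.mul_sum, hx.2, mul_one]
  obtain ⟨x, hx, hxK⟩ := exists_mem_of_dual_covering hn (fun i => {x | D x * x i ≤ d i x})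
    (fun i => isClosed_le (hD.mul (continuous_apply i)) (hd i))
    (fun i x hxi => by simpa [hxi] using hd0 i x)
    (fun x hx => by
      have : (Finset.univ : Finset (Fin n)).Nonempty := ⟨⟨0, hn⟩, by simp⟩
      obtain ⟨i, -, hi⟩ := Finset.exists_le_of_sum_le this (hsum x hx).le
      exact ⟨i, hi⟩)
  have heq : ∀ i, D x * x i = d i x := fun i =>
    (Finset.sum_eq_sum_iff_of_le fun i _ => hxK i).1 (hsum x hx) i (Finset.mem_univ i)
  have hS : (Finset.univ.filter fun i => x i ≠ 0).Nonempty := by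
    by_contra hemp
    rw [Finset.not_nonempty_iff_eq_empty, Finset.filter_eq_empty_iff] at hemp
    have h1 := hx.2
    rw [Finset.sum_eq_zero fun i hi => by simpa using hemp hi] at h1
    exact zero_ne_one h1
  have hmem := hcov _ hS (mem_faceOf_support x hx)
  simp only [Set.mem_iUnion, Finset.mem_filter, Finset.mem_univ, true_and] at hmem
  obtain ⟨i, hxi, hi⟩ := hmem
  have hDx : D x = 0 := by
    have h1 : d i x = 0 := Metric.infDist_zero_of_mem hi
    have h2 := heq i
    rw [h1] at h2
    exact (mul_eq_zero.1 h2).resolve_right hxi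
  refine ⟨x, hx, fun j => ?_⟩
  rw [(hclosed j).mem_iff_infDist_zero (hne j)]
  have h := heq j
  rw [hDx, zero_mul] at h
  exact h.symm
end

section
/- (Gale's Rainbow-KKM lemma.) For every integer n ≥ 1, if C^1,…,C^n are n KKM coverings of the standard simplex Δ_{n−1} (each C^i = (C^i_1,…,C^i_n)), then there exist a permutation π of {1,…,n} and a point x ∈ Δ_{n−1} such that x ∈ C^i_{π(i)} for every i ∈ {1,…,n}. -/
open Finset

/-! ### Scarf's lemma -/

/-- If `f` maps `s` onto a set with one element fewer, exactly two elements of `s` can be removed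
without changing the image, namely the two that share their value; only evenness is recorded. -/
lemma even_card_collapse {α β : Type*} [DecidableEq α] [DecidableEq β] (f : α → β)
    (s : Finset α) (t : Finset β) (him : s.image f = t) (hcard : s.card = t.card + 1) :
    Even (s.filter fun a => (s.erase a).image f = t).card := by
  obtain ⟨a, ha, b, hb, hab, hf⟩ := exists_ne_map_eq_of_card_lt_of_maps_to
    (s := s) (t := t) (f := f) (by omega) (fun x hx => him ▸ mem_image_of_mem f hx)
  have key : ∀ a ∈ s, ∀ b ∈ s, a ≠ b → f a = f b → (s.erase a).image f = t := by
    intro a ha b hb hab hf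
    subst him
    ext y
    simp only [mem_image, mem_erase]
    constructor
    · rintro ⟨x, hx, rfl⟩; exact ⟨x, hx.2, rfl⟩
    · rintro ⟨x, hx, rfl⟩
      by_cases hxa : x = a
      · exact ⟨b, ⟨hab.symm, hb⟩, by rw [hxa, hf]⟩
      · exact ⟨x, ⟨hxa, hx⟩, rfl⟩
  have hinj : Set.InjOn f (s.erase a : Finset α) := by
    rw [← card_image_iff, key a ha b hb hab hf, card_erase_of_mem ha]
    omega
  have : (s.filter fun u => (s.erase u).image f = t) = {a, b} := by
    ext u
    simp only [mem_filter, mem_insert, mem_singleton]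
    constructor
    · rintro ⟨hu, hut⟩
      by_contra! hne
      have : f u ∈ (s.erase u).image f := by rw [hut, ← him]; exact mem_image_of_mem f hu
      obtain ⟨v, hv, hvu⟩ := mem_image.1 this
      rw [mem_erase] at hv
      have hua : u ∈ s.erase a := mem_erase.2 ⟨hne.1, hu⟩
      by_cases hva : v = a
      · exact hne.2 (hinj hua (mem_erase.2 ⟨hab.symm, hb⟩) (by rw [← hvu, hva, hf]))
      · exact hv.1 (hinj (mem_erase.2 ⟨hva, hv.2⟩) hua hvu)
    · rintro (rfl | rfl)
      · exact ⟨ha, key _ ha _ hb hab hf⟩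
      · exact ⟨hb, key _ hb _ ha hab.symm hf.symm⟩
  rw [this, card_pair hab]
  exact even_two

/-- `B` is dominant for the orders `r i` (given by ranks) if no `y` exceeds, for every `i`, the
`r i`-minimum of `B`. -/
def IsDominant {I X : Type*} (r : I → X → ℕ) (B : Finset X) : Prop :=
  ∀ y, ∃ i, ∀ x ∈ B, r i y ≤ r i x

lemma IsDominant.mono {I X : Type*} {r : I → X → ℕ} {B B' : Finset X} (h : IsDominant r B)
    (hs : B' ⊆ B) : IsDominant r B' := fun y =>
  let ⟨i, hi⟩ := h y
  ⟨i, fun x hx => hi x (hs hx)⟩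

open Classical in
/-- The pseudomanifold property of the complex of dominant sets. Let `m i` be the `r i`-least element
of `B`. Dominance makes `m` surjective onto `B`, so exactly two indices `i` are redundant for it.
For each of these, the `r i`-greatest `y` with `m k < y` in the order `k` for all `k ≠ i` extends
`B` to a dominant set, and every extension arises so. The hypothesis `hM` says that such `y`
exist. -/
lemma even_card_extensions {I X : Type*} [Fintype I] [Fintype X]
    (r : I → X → ℕ) (hr : ∀ i, Function.Injective (r i)) (B : Finset X) (hB : B.Nonempty)
    (hdom : IsDominant r B) (hcard : B.card + 1 = Fintype.card I)
    (hM : ∀ i, ∃ y, ∀ k, k ≠ i → ∃ x ∈ B, r k x < r k y) :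
    Even (univ.filter fun x => x ∉ B ∧ IsDominant r (insert x B)).card := by
  choose m hmB hmin using fun i => exists_min_image B (r i) hB
  have hsurj : univ.image m = B := by
    ext b
    simp only [mem_image, mem_univ, true_and]
    constructor
    · rintro ⟨i, rfl⟩; exact hmB i
    · intro hb
      obtain ⟨i, hi⟩ := hdom b
      exact ⟨i, hr i (le_antisymm (hmin i b hb) (hi _ (hmB i)))⟩
  have hev := even_card_collapse m univ B hsurj (by rw [card_univ, hcard])
  let M : I → Finset X := fun i => univ.filter fun y => ∀ k, k ≠ i → r k (m k) < r k y
  have hMne : ∀ i, (M i).Nonempty := by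
    intro i
    obtain ⟨y, hy⟩ := hM i
    refine ⟨y, mem_filter.2 ⟨mem_univ _, fun k hk => ?_⟩⟩
    obtain ⟨x, hx, hxy⟩ := hy k hk
    exact (hmin k x hx).trans_lt hxy
  choose g hgM hgmax using fun i => exists_max_image (M i) (r i) (hMne i)
  have hg : ∀ i k, k ≠ i → r k (m k) < r k (g i) := fun i => (mem_filter.1 (hgM i)).2
  suffices h : (univ.filter fun i => (univ.erase i).image m = B).card =
      (univ.filter fun x => x ∉ B ∧ IsDominant r (insert x B)).card by rwa [← h]
  refine card_bij (fun i _ => g i) ?_ ?_ ?_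
  · intro i hi
    have hi := (mem_filter.1 hi).2
    refine mem_filter.2 ⟨mem_univ _, ?_, ?_⟩
    · intro hgB
      rw [← hi] at hgB
      obtain ⟨k, hk, hkg⟩ := mem_image.1 hgB
      have := hg i k (ne_of_mem_erase hk)
      rw [hkg] at this
      exact lt_irrefl _ this
    · intro y
      by_cases hy : y ∈ M i
      · refine ⟨i, fun x hx => ?_⟩
        rcases mem_insert.1 hx with rfl | hx
        · exact hgmax i y hy
        · obtain ⟨l, hl⟩ := hdom y
          by_cases hli : l = i
          · exact hli ▸ hl x hx
          · exact absurd ((mem_filter.1 hy).2 l hli) (not_lt.2 (hl _ (hmB l)))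
      · have : ∃ k, k ≠ i ∧ r k y ≤ r k (m k) := by
          by_contra! h
          exact hy (mem_filter.2 ⟨mem_univ _, h⟩)
        obtain ⟨k, hk, hky⟩ := this
        refine ⟨k, fun x hx => ?_⟩
        rcases mem_insert.1 hx with rfl | hx
        · exact hky.trans (hg i k hk).le
        · exact hky.trans (hmin k x hx)
  · intro i _ j _ hij
    by_contra hne
    obtain ⟨k, hk⟩ := hdom (g i)
    refine absurd (hk _ (hmB k)) (not_le.2 ?_)
    by_cases hki : k = i
    · have := hg j k (by rw [hki]; exact hne)
      rwa [← hij] at this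
    · exact hg i k hki
  · intro x hx
    obtain ⟨hxB, hxdom⟩ := (mem_filter.1 hx).2
    have hne : ∀ k, r k x ≤ r k (m k) → r k x < r k (m k) := fun k hk =>
      lt_of_le_of_ne hk fun h => hxB (hr k h ▸ hmB k)
    -- each `b ∈ B` is still the minimum of `insert x B` in some order, necessarily with `b` below `x`
    have hrep : ∀ b ∈ B, ∃ l, m l = b ∧ ¬ r l x ≤ r l (m l) := by
      intro b hb
      obtain ⟨l, hl⟩ := hxdom b
      have h1 : m l = b := hr l (le_antisymm (hmin l b hb) (hl _ (mem_insert_of_mem (hmB l))))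
      refine ⟨l, h1, fun h => ?_⟩
      have h2 := hl x (mem_insert_self _ _)
      have h3 := hne l h
      rw [h1] at h3
      omega
    obtain ⟨i, hi⟩ := hxdom x
    have hi : r i x ≤ r i (m i) := hi _ (mem_insert_of_mem (hmB i))
    -- if `x` were below `B` in two orders, `|I| - 2` indices would represent all of `B`
    have hxM : ∀ k, k ≠ i → r k (m k) < r k x := by
      intro k hk
      by_contra! hkx
      have hsub : B ⊆ ((univ.erase i).erase k).image m := by
        intro b hb
        obtain ⟨l, hl, hlx⟩ := hrep b hb
        refine mem_image.2 ⟨l, mem_erase.2 ⟨?_, mem_erase.2 ⟨?_, mem_univ _⟩⟩, hl⟩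
        · rintro rfl; exact hlx hkx
        · rintro rfl; exact hlx hi
      have h1 := (card_le_card hsub).trans card_image_le
      have h2 : (univ.erase i).card + 1 = Fintype.card I := by
        rw [card_erase_add_one (mem_univ i), card_univ]
      have h3 := card_erase_add_one (mem_erase.2 ⟨hk, mem_univ k⟩)
      omega
    refine ⟨i, mem_filter.2 ⟨mem_univ _, ?_⟩, ?_⟩
    · ext b
      constructor
      · intro hb
        obtain ⟨l, _, rfl⟩ := mem_image.1 hb
        exact hmB l
      · intro hb
        obtain ⟨l, hl, hlx⟩ := hrep b hb
        refine mem_image.2 ⟨l, mem_erase.2 ⟨?_, mem_univ _⟩, hl⟩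
        rintro rfl; exact hlx hi
    · have h1 := hgmax i x (mem_filter.2 ⟨mem_univ _, hxM⟩)
      obtain ⟨l, hl⟩ := hxdom (g i)
      by_cases hli : l = i
      · subst hli
        exact hr l (le_antisymm (hl x (mem_insert_self _ _)) h1)
      · exact absurd (hg i l hli) (not_lt.2 (hl _ (mem_insert_of_mem (hmB l))))

open Classical in
/-- Scarf's lemma. To the points of `T` one adds a slack element `Sum.inr i` of colour `i` for each
index `i`, lowest in the order `i` and above all of `T` in the other orders. Then some dominant
set contains every colour. The proof counts incidences between rooms (dominant sets of size `|I|`)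
and doors (dominant sets of size `|I| - 1` with colours exactly `I \ {i₀}`): without a colourful
room each room has an even number of doors, while each door lies in two rooms, except the door
`D₀` of slack elements, which lies in one. -/
theorem exists_dominant_colourful {I T : Type*} [Fintype I] [Nonempty I] [Fintype T] [Nonempty T]
    (r : I → T ⊕ I → ℕ) (hr : ∀ i, Function.Injective (r i))
    (hlo : ∀ i x, r i (Sum.inr i) ≤ r i x)
    (hhi : ∀ i j t, j ≠ i → r i (Sum.inl t) < r i (Sum.inr j)) (c : T → I) :
    ∃ B : Finset (T ⊕ I), IsDominant r B ∧ ∀ i, ∃ x ∈ B, Sum.elim c id x = i := by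
  by_contra hex
  obtain ⟨i₀⟩ := ‹Nonempty I›
  set col : T ⊕ I → I := Sum.elim c id with hcol
  have hno : ∀ B, IsDominant r B → B.image col ≠ univ := fun B hB h =>
    hex ⟨B, hB, fun i => mem_image.1 (h ▸ mem_univ i)⟩
  let rooms : Finset (Finset (T ⊕ I)) :=
    univ.filter fun B => IsDominant r B ∧ B.card = Fintype.card I
  let doors : Finset (Finset (T ⊕ I)) :=
    univ.filter fun D => IsDominant r D ∧ D.card + 1 = Fintype.card I ∧
      D.image col = univ.erase i₀
  have hcount := sum_card_bipartiteAbove_eq_sum_card_bipartiteBelow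
    (s := doors) (t := rooms) (fun D B => D ⊆ B)
  have hn : (univ.erase i₀).card + 1 = Fintype.card I := by
    rw [card_erase_add_one (mem_univ i₀), card_univ]
  have hrooms : Even (∑ B ∈ rooms, (doors.bipartiteBelow (fun D B => D ⊆ B) B).card) := by
    refine even_sum _ fun B hB => ?_
    obtain ⟨hBd, hBc⟩ := (mem_filter.1 hB).2
    have hcard : (B.filter fun u => (B.erase u).image col = univ.erase i₀).card =
        (doors.bipartiteBelow (fun D B => D ⊆ B) B).card := by
      refine card_bij (fun u _ => B.erase u) ?_ ?_ ?_
      · intro u hu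
        obtain ⟨huB, hu⟩ := mem_filter.1 hu
        refine mem_filter.2 ⟨mem_filter.2 ⟨mem_univ _, hBd.mono (erase_subset _ _), ?_, hu⟩,
          erase_subset _ _⟩
        rw [card_erase_add_one huB, hBc]
      · intro u hu v hv huv
        exact (erase_inj B (mem_filter.1 hu).1).1 huv
      · intro D hD
        obtain ⟨hD, hDB⟩ := mem_filter.1 hD
        obtain ⟨-, hDc, hDi⟩ := (mem_filter.1 hD).2
        obtain ⟨u, hu⟩ := exists_eq_insert_iff.2 ⟨hDB, by rw [hDc, hBc]⟩
        obtain ⟨huD, rfl⟩ := hu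
        refine ⟨u, mem_filter.2 ⟨mem_insert_self _ _, ?_⟩, ?_⟩ <;> rw [erase_insert huD]
        exact hDi
    rw [← hcard]
    by_cases him : B.image col = univ.erase i₀
    · exact even_card_collapse col B _ him (by rw [hBc, hn])
    · have : (B.filter fun u => (B.erase u).image col = univ.erase i₀) = ∅ := by
        refine filter_eq_empty_iff.2 fun u hu h => ?_
        have h1 : B.image col = insert (col u) (univ.erase i₀) := by
          rw [← h, ← image_insert, insert_erase hu]
        by_cases hcu : col u = i₀
        · exact hno B hBd (by rw [h1, hcu, insert_erase (mem_univ _)])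
        · exact him (by rw [h1, insert_eq_of_mem (mem_erase.2 ⟨hcu, mem_univ _⟩)])
      simp [this]
  have hext : ∀ D ∈ doors, (univ.filter fun x => x ∉ D ∧ IsDominant r (insert x D)).card =
      (rooms.bipartiteAbove (fun D B => D ⊆ B) D).card := by
    intro D hD
    obtain ⟨-, hDc, -⟩ := (mem_filter.1 hD).2
    refine card_bij (fun x _ => insert x D) ?_ ?_ ?_
    · intro x hx
      obtain ⟨hxD, hx⟩ := (mem_filter.1 hx).2
      exact mem_filter.2 ⟨mem_filter.2 ⟨mem_univ _, hx, by rw [card_insert_of_notMem hxD, hDc]⟩,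
        subset_insert _ _⟩
    · intro x hx y _ hxy
      exact (insert_inj (mem_filter.1 hx).2.1).1 hxy
    · intro B hB
      obtain ⟨hB, hDB⟩ := mem_filter.1 hB
      obtain ⟨hBd, hBc⟩ := (mem_filter.1 hB).2
      obtain ⟨u, huD, rfl⟩ := exists_eq_insert_iff.2 ⟨hDB, by rw [hDc, hBc]⟩
      exact ⟨u, mem_filter.2 ⟨mem_univ _, huD, hBd⟩, rfl⟩
  let D₀ : Finset (T ⊕ I) := (univ.erase i₀).image Sum.inr
  have hD₀mem : ∀ x, x ∈ D₀ ↔ ∃ j, j ≠ i₀ ∧ Sum.inr j = x := by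
    intro x; simp [D₀]
  have hD₀ : D₀ ∈ doors := by
    refine mem_filter.2 ⟨mem_univ _, ?_, ?_, ?_⟩
    · rintro (t | j)
      · refine ⟨i₀, fun x hx => ?_⟩
        obtain ⟨j, hj, rfl⟩ := (hD₀mem x).1 hx
        exact (hhi i₀ j t hj).le
      · exact ⟨j, fun x _ => hlo j x⟩
    · rw [card_image_of_injective _ Sum.inr_injective, hn]
    · simp [D₀, image_image, hcol, Function.comp_def]
  have hout : (rooms.bipartiteAbove (fun D B => D ⊆ B) D₀).card = 1 := by
    rw [← hext D₀ hD₀, card_eq_one]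
    obtain ⟨t, -, ht⟩ := exists_max_image (univ : Finset T) (fun t => r i₀ (Sum.inl t))
      univ_nonempty
    have hlt : ∀ i t, r i (Sum.inr i) < r i (Sum.inl t) := fun i t =>
      lt_of_le_of_ne (hlo i _) fun h => by simpa using hr i h
    -- in a dominant superset of `D₀` only the index `i₀` can bound a point of `T` from above
    have hidx : ∀ x s, IsDominant r (insert x D₀) → r i₀ (Sum.inl s) ≤ r i₀ x := by
      intro x s h
      obtain ⟨i, hi⟩ := h (Sum.inl s)
      by_cases hii : i = i₀
      · exact hii ▸ hi x (mem_insert_self _ _)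
      · exact absurd (hi (Sum.inr i) (mem_insert_of_mem ((hD₀mem _).2 ⟨i, hii, rfl⟩)))
          (not_le.2 (hlt i s))
    refine ⟨Sum.inl t, ?_⟩
    ext x
    simp only [mem_filter, mem_univ, true_and, mem_singleton]
    constructor
    · rintro ⟨hx, hd⟩
      rcases x with s | j
      · exact hr i₀ (le_antisymm (ht s (mem_univ _)) (hidx _ t hd))
      · have hj : j = i₀ := by
          by_contra hj
          exact hx ((hD₀mem _).2 ⟨j, hj, rfl⟩)
        subst hj
        exact absurd (hidx _ t hd) (not_le.2 (hlt j t))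
    · rintro rfl
      refine ⟨fun h => ?_, ?_⟩
      · obtain ⟨j, -, hj⟩ := (hD₀mem _).1 h
        simp at hj
      · rintro (s | j)
        · refine ⟨i₀, fun x hx => ?_⟩
          rcases mem_insert.1 hx with rfl | hx
          · exact ht s (mem_univ _)
          · obtain ⟨j, hj, rfl⟩ := (hD₀mem x).1 hx
            exact (hhi i₀ j s hj).le
        · exact ⟨j, fun x _ => hlo j x⟩
  have hin : ∀ D ∈ doors.erase D₀, Even (rooms.bipartiteAbove (fun D B => D ⊆ B) D).card := by
    intro D hD
    obtain ⟨hne, hD⟩ := mem_erase.1 hD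
    rw [← hext D hD]
    obtain ⟨hDd, hDc, hDi⟩ := (mem_filter.1 hD).2
    have hT : ∃ t, Sum.inl t ∈ D := by
      by_contra! hT
      refine hne ?_
      ext x
      rw [hD₀mem]
      constructor
      · intro hx
        rcases x with t | j
        · exact absurd hx (hT t)
        · have : col (Sum.inr j) ∈ univ.erase i₀ := hDi ▸ mem_image_of_mem col hx
          exact ⟨j, ne_of_mem_erase this, rfl⟩
      · rintro ⟨j, hj, rfl⟩
        have : j ∈ D.image col := by rw [hDi]; exact mem_erase.2 ⟨hj, mem_univ _⟩
        obtain ⟨x, hx, hxj⟩ := mem_image.1 this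
        rcases x with t | k
        · exact absurd hx (hT t)
        · have : k = j := hxj
          exact this ▸ hx
    obtain ⟨t, ht⟩ := hT
    convert even_card_extensions r hr D ⟨_, ht⟩ hDd hDc fun i =>
      ⟨Sum.inr i, fun k hk => ⟨_, ht, hhi k i t hk.symm⟩⟩
  rw [← hcount, ← add_sum_erase _ _ hD₀, hout] at hrooms
  have := even_sum _ hin
  rw [Nat.even_add] at hrooms
  exact absurd (hrooms.2 this) (by decide)

/-! ### Closed covers of the simplex -/

/-- Scarf's lemma on the grid points with natural coordinates of sum `N`: there is a grid point `z`
such that each index `i` has a point of colour `i` within distance `n` of `z`, unless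
`z i` itself is at most `n`. -/
lemma exists_close_grid_points {n : ℕ} (hn : 0 < n) (N : ℕ) (c : (Fin n → ℕ) → Fin n) :
    ∃ z : Fin n → ℕ, ∑ i, z i = N ∧ ∀ i, z i ≤ n ∨
      ∃ x : Fin n → ℕ, ∑ k, x k = N ∧ c x = i ∧ ∀ k, |(x k : ℤ) - z k| ≤ n := by
  classical
  let T := {x : Fin n → ℕ // x ∈ piAntidiag (univ : Finset (Fin n)) N}
  have hTsum : ∀ x : T, ∑ i, x.1 i = N := fun x => (mem_piAntidiag.1 x.2).1
  have hTmk : ∀ x : Fin n → ℕ, ∑ i, x i = N → x ∈ piAntidiag (univ : Finset (Fin n)) N :=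
    fun x hx => mem_piAntidiag.2 ⟨hx, fun i _ => mem_univ i⟩
  have hTle : ∀ (x : T) i, x.1 i ≤ N := fun x i => by
    exact (single_le_sum (f := x.1) (fun _ _ => Nat.zero_le _) (mem_univ i)).trans_eq (hTsum x)
  let i₁ : Fin n := ⟨0, hn⟩
  have : Nonempty (Fin n) := ⟨i₁⟩
  have : Nonempty T := ⟨⟨Pi.single i₁ N, hTmk _ (by simp)⟩⟩
  let K := Fintype.card T
  let e : T ≃ Fin K := Fintype.equivFin T
  -- order `i` compares `i`-th coordinates and breaks ties by the enumeration `e`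
  let r : Fin n → T ⊕ Fin n → ℕ := fun i => Sum.elim (fun x => x.1 i * K + e x + 1)
    (fun j => if j = i then 0 else (N + 1) * K + 1 + j)
  have hrl : ∀ i (x : T), r i (Sum.inl x) = x.1 i * K + e x + 1 := fun _ _ => rfl
  have hrr : ∀ i j, r i (Sum.inr j) = if j = i then 0 else (N + 1) * K + 1 + j := fun _ _ => rfl
  have hmono : ∀ i (x y : T), r i (Sum.inl x) ≤ r i (Sum.inl y) → x.1 i ≤ y.1 i := by
    intro i x y h
    by_contra! hlt
    rw [hrl, hrl] at h
    have := (e y).2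
    nlinarith [Nat.mul_le_mul_right K (Nat.succ_le_of_lt hlt)]
  have hhi : ∀ i j (t : T), j ≠ i → r i (Sum.inl t) < r i (Sum.inr j) := by
    intro i j t hj
    rw [hrl, hrr, if_neg hj]
    have := (e t).2
    nlinarith [Nat.mul_le_mul_right K (hTle t i)]
  have hinj : ∀ i, Function.Injective (r i) := by
    rintro i (x | j) (y | k) h
    · have h1 : x.1 i = y.1 i := le_antisymm (hmono i x y h.le) (hmono i y x h.ge)
      rw [hrl, hrl, h1] at h
      have : e x = e y := Fin.ext (by omega)
      rw [e.injective this]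
    · by_cases hk : k = i
      · rw [hrl, hrr, if_pos hk] at h; omega
      · exact absurd h (hhi i k x hk).ne
    · by_cases hj : j = i
      · rw [hrl, hrr, if_pos hj] at h; omega
      · exact absurd h (hhi i j y hj).ne'
    · rw [hrr, hrr] at h
      congr 1
      split_ifs at h with h1 h2 h2
      · rw [h1, h2]
      · omega
      · omega
      · exact Fin.ext (by omega)
  obtain ⟨B, hBd, hBc⟩ := exists_dominant_colourful r hinj
    (fun i x => by rw [hrr, if_pos rfl]; exact Nat.zero_le _) hhi (fun x => c x.1)
  -- an index whose slack element lies in `B` never witnesses dominance over a grid point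
  have hwit : ∀ y : T, ∃ i, Sum.inr i ∉ B ∧ ∀ x : T, Sum.inl x ∈ B → y.1 i ≤ x.1 i := by
    intro y
    obtain ⟨i, hi⟩ := hBd (Sum.inl y)
    refine ⟨i, fun h => ?_, fun x hx => hmono i y x (hi _ hx)⟩
    have := hi _ h
    rw [hrl, hrr, if_pos rfl] at this
    omega
  have hσ : (univ.filter fun t : T => Sum.inl t ∈ B).Nonempty := by
    obtain ⟨i, hi, -⟩ := hwit (Classical.arbitrary T)
    obtain ⟨x, hx, hxi⟩ := hBc i
    rcases x with t | j
    · exact ⟨t, mem_filter.2 ⟨mem_univ _, hx⟩⟩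
    · exact absurd hx (by rw [show j = i from hxi]; exact hi)
  choose m hm hmin using fun i : Fin n => exists_min_image _ (fun t : T => t.1 i) hσ
  -- `p i` is the least `i`-th coordinate, or `-1` when the slack element of `i` is in `B`
  let p : Fin n → ℤ := fun i => if Sum.inr i ∈ B then -1 else ((m i).1 i : ℤ)
  have hple : ∀ (x : T), Sum.inl x ∈ B → ∀ i, p i ≤ x.1 i := by
    intro x hx i
    simp only [p]
    split_ifs
    · omega
    · exact_mod_cast hmin i x (mem_filter.2 ⟨mem_univ _, hx⟩)
  -- otherwise some grid point would exceed all these minima, against dominance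
  have hpsum : (N : ℤ) - n < ∑ i, p i := by
    by_contra! hle
    let q : Fin n → ℕ := fun i => if Sum.inr i ∈ B then 0 else (m i).1 i + 1
    have hq : ∀ i, (q i : ℤ) = p i + 1 := by
      intro i; simp only [p, q]; split_ifs <;> simp
    have hqs : ∑ i, q i ≤ N := by
      have : ((∑ i, q i : ℕ) : ℤ) ≤ N := by
        push_cast
        simp only [hq, sum_add_distrib, sum_const, card_univ, Fintype.card_fin, nsmul_eq_mul]
        linarith
      exact_mod_cast this
    let y : Fin n → ℕ := fun i => q i + (Pi.single i₁ (N - ∑ i, q i) : Fin n → ℕ) i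
    have hy : ∑ i, y i = N := by
      simp only [y, sum_add_distrib, sum_pi_single', mem_univ, if_true]
      omega
    obtain ⟨i, hi, hlt⟩ := hwit ⟨y, hTmk y hy⟩
    have h1 := hlt (m i) (mem_filter.1 (hm i)).2
    have h2 : q i ≤ y i := Nat.le_add_right _ _
    have h3 : q i = (m i).1 i + 1 := if_neg hi
    dsimp only at h1
    omega
  have hup : ∀ (x : T), Sum.inl x ∈ B → ∀ i, (x.1 i : ℤ) < p i + n := by
    intro x hx i
    have h1 : (x.1 i : ℤ) - p i ≤ ∑ k, ((x.1 k : ℤ) - p k) :=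
      single_le_sum (f := fun k => (x.1 k : ℤ) - p k)
        (fun k _ => sub_nonneg.2 (hple x hx k)) (mem_univ i)
    have h2 : ∑ k, (x.1 k : ℤ) = N := by exact_mod_cast hTsum x
    rw [sum_sub_distrib, h2] at h1
    linarith
  obtain ⟨z, hz⟩ := hσ
  have hz := (mem_filter.1 hz).2
  refine ⟨z.1, hTsum z, fun i => ?_⟩
  by_cases hi : Sum.inr i ∈ B
  · left
    have h1 := hup z hz i
    have h2 : p i = -1 := if_pos hi
    omega
  · right
    obtain ⟨x, hx, hxi⟩ := hBc i
    rcases x with x | j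
    · refine ⟨x.1, hTsum x, hxi, fun k => ?_⟩
      have h1 := hup z hz k
      have h2 := hup x hx k
      have h3 := hple z hz k
      have h4 := hple x hx k
      rw [abs_le]
      constructor <;> linarith
    · exact absurd hx (by rw [show j = i from hxi]; exact hi)

lemma exists_approx_mem_of_cover {n : ℕ} (hn : 0 < n) (A : Fin n → Set (Fin n → ℝ))
    (hcov : ∀ x ∈ stdSimplex ℝ (Fin n), ∃ i, x ∈ A i) (N : ℕ) :
    ∃ z ∈ stdSimplex ℝ (Fin n), ∀ i, z i ≤ n / ((N : ℝ) + 1) ∨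
      ∃ x ∈ A i, dist x z ≤ n / ((N : ℝ) + 1) := by
  have hN : (0 : ℝ) < (N : ℝ) + 1 := by positivity
  let s : (Fin n → ℕ) → Fin n → ℝ := fun x i => (x i : ℝ) / (N + 1)
  have hs : ∀ x : Fin n → ℕ, ∑ i, x i = N + 1 → s x ∈ stdSimplex ℝ (Fin n) := by
    intro x hx
    refine ⟨fun i => by positivity, ?_⟩
    have : ∑ i, (x i : ℝ) = N + 1 := by exact_mod_cast hx
    simp only [s]
    rw [← sum_div, this, div_self hN.ne']
  have hcol : ∀ x : Fin n → ℕ, ∃ i, s x ∈ stdSimplex ℝ (Fin n) → s x ∈ A i := by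
    intro x
    by_cases hx : s x ∈ stdSimplex ℝ (Fin n)
    · obtain ⟨i, hi⟩ := hcov _ hx
      exact ⟨i, fun _ => hi⟩
    · exact ⟨⟨0, hn⟩, fun h => absurd h hx⟩
  choose c hc using hcol
  obtain ⟨z, hz, hzi⟩ := exists_close_grid_points hn (N + 1) c
  refine ⟨s z, hs z hz, fun i => ?_⟩
  rcases hzi i with h | ⟨x, hx, rfl, hxz⟩
  · left
    have : (z i : ℝ) ≤ n := by exact_mod_cast h
    exact div_le_div_of_nonneg_right this hN.le
  · right
    refine ⟨s x, hc x (hs x hx), (dist_pi_le_iff (by positivity)).2 fun k => ?_⟩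
    have h1 : |(x k : ℝ) - z k| ≤ n := by exact_mod_cast hxz k
    rw [Real.dist_eq, ← sub_div, abs_div, abs_of_pos hN]
    exact div_le_div_of_nonneg_right h1 hN.le

lemma tendsto_const_div_succ (a : ℝ) :
    Filter.Tendsto (fun k : ℕ => a / ((k : ℝ) + 1)) Filter.atTop (nhds 0) := by
  simpa [div_eq_mul_inv] using (tendsto_one_div_add_atTop_nhds_zero_nat (𝕜 := ℝ)).const_mul a

/-- For a closed cover of the simplex, with no condition on faces, there is a point that lies in
every `A i` whose index belongs to its support. -/
theorem exists_mem_or_eq_zero_of_closed_cover {n : ℕ} (hn : 0 < n) (A : Fin n → Set (Fin n → ℝ))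
    (hA : ∀ i, IsClosed (A i)) (hcov : ∀ x ∈ stdSimplex ℝ (Fin n), ∃ i, x ∈ A i) :
    ∃ z ∈ stdSimplex ℝ (Fin n), ∀ i, z i = 0 ∨ z ∈ A i := by
  choose z hz hzA using exists_approx_mem_of_cover hn A hcov
  obtain ⟨w, hw, φ, hφ, hlim⟩ := (isCompact_stdSimplex (𝕜 := ℝ) (Fin n)).tendsto_subseq hz
  refine ⟨w, hw, fun i => or_iff_not_imp_left.2 fun hwi => ?_⟩
  have hpos : 0 < w i := lt_of_le_of_ne (hw.1 i) (Ne.symm hwi)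
  rw [← (hA i).closure_eq, Metric.mem_closure_iff]
  intro ε hε
  have hsmall : Filter.Tendsto (fun k => (n : ℝ) / ((φ k : ℝ) + 1)) Filter.atTop (nhds 0) :=
    (tendsto_const_div_succ n).comp hφ.tendsto_atTop
  have hcoord : Filter.Tendsto (fun k => z (φ k) i) Filter.atTop (nhds (w i)) :=
    (tendsto_pi_nhds.1 hlim) i
  obtain ⟨k, h1, h2, h3, h4⟩ := ((hsmall.eventually_lt_const (half_pos hε)).and
    ((hsmall.eventually_lt_const (half_pos hpos)).and
      ((hcoord.eventually_const_lt (half_lt_self hpos)).and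
        (Metric.tendsto_nhds.1 hlim _ (half_pos hε))))).exists
  rcases hzA (φ k) i with h | ⟨x, hx, hxz⟩
  · linarith
  · refine ⟨x, hx, ?_⟩
    have := dist_triangle_right w x (z (φ k))
    rw [dist_comm w (z (φ k))] at this
    simp only [Function.comp_apply] at h4
    linarith

/-! ### Rainbow coverings -/

/-- The empty set needs the zero function, since `Metric.infDist x ∅ = 0`. -/
lemma exists_continuous_bump {E : Type*} [PseudoMetricSpace E] (C : Set E) {ε : ℝ} (hε : 0 < ε) :
    ∃ h : E → ℝ, Continuous h ∧ (∀ x, 0 ≤ h x) ∧ (∀ x ∈ C, 0 < h x) ∧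
      ∀ x, 0 < h x → ∃ y ∈ C, dist x y < ε := by
  rcases C.eq_empty_or_nonempty with rfl | hC
  · exact ⟨fun _ => 0, continuous_const, fun _ => le_rfl, by simp, by simp⟩
  · refine ⟨fun x => max 0 (ε - Metric.infDist x C), by fun_prop, fun x => le_max_left _ _,
      fun x hx => ?_, fun x hx => ?_⟩
    · simp [Metric.infDist_zero_of_mem hx, hε]
    · have : Metric.infDist x C < ε := by
        rcases lt_max_iff.1 hx with h | h
        · exact absurd h (lt_irrefl _)
        · linarith
      exact (Metric.infDist_lt_iff hC).1 this

/-- The KKM condition, applied to the smallest face containing `x`. -/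
lemma IsKKMCovering.exists_mem_of_pos {n : ℕ} {C : Fin n → Set (Fin n → ℝ)}
    (hC : IsKKMCovering C) {x : Fin n → ℝ} (hx : x ∈ stdSimplex ℝ (Fin n)) :
    ∃ j, 0 < x j ∧ x ∈ C j := by
  classical
  let S : Finset (Fin n) := univ.filter fun j => 0 < x j
  have hoff : ∀ j, j ∉ S → x j = 0 := fun j hj =>
    le_antisymm (not_lt.1 fun h => hj (mem_filter.2 ⟨mem_univ _, h⟩)) (hx.1 j)
  have hsum : ∑ j ∈ S, x j = 1 := by
    rw [← hx.2]
    exact sum_subset (subset_univ _) fun j _ hj => hoff j hj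
  have hS : S.Nonempty := by
    by_contra h
    rw [not_nonempty_iff_eq_empty] at h
    simp [h] at hsum
  have hface : x ∈ faceOf S := by
    have hrep : x = ∑ j ∈ S, x j • (Pi.single j (1 : ℝ) : Fin n → ℝ) := by
      ext k
      simp only [Finset.sum_apply, Pi.smul_apply, Pi.single_apply, smul_eq_mul, mul_ite, mul_one,
        mul_zero, sum_ite_eq]
      split_ifs with h
      · rfl
      · exact hoff k h
    rw [hrep]
    exact (convex_convexHull ℝ _).sum_mem (fun j _ => hx.1 j) hsum
      fun j hj => subset_convexHull ℝ _ ⟨j, hj, rfl⟩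
  have := hC.2 S hS hface
  simp only [Set.mem_iUnion] at this
  obtain ⟨j, hj, hxj⟩ := this
  exact ⟨j, (mem_filter.1 hj).2, hxj⟩

lemma exists_perm_pos_of_mem_doublyStochastic {n : ℕ} {M : Matrix (Fin n) (Fin n) ℝ}
    (hM : M ∈ doublyStochastic ℝ (Fin n)) : ∃ π : Equiv.Perm (Fin n), ∀ i, 0 < M i (π i) := by
  obtain ⟨w, hw0, hw1, hwM⟩ := exists_eq_sum_perm_of_mem_doublyStochastic hM
  obtain ⟨σ, -, hσ⟩ : ∃ σ ∈ univ, 0 < w σ := by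
    by_contra! h
    linarith [sum_nonpos h]
  refine ⟨σ, fun i => ?_⟩
  rw [← hwM, Matrix.sum_apply]
  refine sum_pos' (fun τ _ => ?_) ⟨σ, mem_univ _, ?_⟩
  · rw [Matrix.smul_apply, smul_eq_mul]
    refine mul_nonneg (hw0 τ) ?_
    rw [Equiv.Perm.permMatrix, PEquiv.toMatrix_apply]
    split_ifs <;> norm_num
  · rw [Matrix.smul_apply, smul_eq_mul]
    simpa [Equiv.Perm.permMatrix, PEquiv.toMatrix_apply] using hσ

/-- The rainbow statement up to `ε`. -/
lemma exists_perm_approx {n : ℕ} (hn : 0 < n) (C : Fin n → Fin n → Set (Fin n → ℝ))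
    (hC : ∀ i, IsKKMCovering (C i)) {ε : ℝ} (hε : 0 < ε) :
    ∃ (π : Equiv.Perm (Fin n)) (x : Fin n → ℝ),
      x ∈ stdSimplex ℝ (Fin n) ∧ ∀ i, ∃ y ∈ C i (π i), dist x y < ε := by
  choose h hcont hnonneg hpos hnear using fun i j => exists_continuous_bump (C i j) hε
  let s : Fin n → (Fin n → ℝ) → ℝ := fun i x => ∑ k, x k * h i k x
  have hs : ∀ i, ∀ x ∈ stdSimplex ℝ (Fin n), 0 < s i x := by
    intro i x hx
    obtain ⟨j, hj, hxj⟩ := (hC i).exists_mem_of_pos hx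
    exact sum_pos' (fun k _ => mul_nonneg (hx.1 k) (hnonneg i k x))
      ⟨j, mem_univ _, mul_pos hj (hpos i j x hxj)⟩
  have hscont : ∀ i, Continuous (s i) := fun i =>
    continuous_finsetSum _ fun k _ => (continuous_apply k).mul (hcont i k)
  let g : Fin n → Fin n → (Fin n → ℝ) → ℝ := fun i j x => x j * h i j x / s i x
  have hg0 : ∀ i j, ∀ x ∈ stdSimplex ℝ (Fin n), 0 ≤ g i j x := fun i j x hx =>
    div_nonneg (mul_nonneg (hx.1 j) (hnonneg i j x)) (hs i x hx).le
  have hrow : ∀ i, ∀ x ∈ stdSimplex ℝ (Fin n), ∑ j, g i j x = 1 := by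
    intro i x hx
    simp only [g]
    rw [← sum_div]
    exact div_self (hs i x hx).ne'
  have htot : ∀ x ∈ stdSimplex ℝ (Fin n), ∑ j, ∑ i, g i j x = n := by
    intro x hx
    rw [sum_comm, sum_congr rfl fun i _ => hrow i x hx]
    simp
  have hgcont : ∀ i j, ContinuousOn (g i j) (stdSimplex ℝ (Fin n)) := fun i j =>
    (((continuous_apply j).mul (hcont i j)).continuousOn).div (hscont i).continuousOn
      fun x hx => (hs i x hx).ne'
  let A : Fin n → Set (Fin n → ℝ) := fun j =>
    stdSimplex ℝ (Fin n) ∩ (fun x => ∑ i, g i j x) ⁻¹' Set.Iic 1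
  have hA : ∀ j, IsClosed (A j) := fun j =>
    (continuousOn_finsetSum _ fun i _ => hgcont i j).preimage_isClosed_of_isClosed
      (isClosed_stdSimplex (𝕜 := ℝ) (Fin n)) isClosed_Iic
  obtain ⟨x, hx, hxA⟩ := exists_mem_or_eq_zero_of_closed_cover hn A hA (by
    intro x hx
    by_contra! hno
    have hgt : ∀ j ∈ univ, (1 : ℝ) < ∑ i, g i j x := fun j _ => by
      by_contra! hle
      exact hno j ⟨hx, hle⟩
    have := sum_lt_sum_of_nonempty ⟨⟨0, hn⟩, mem_univ _⟩ hgt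
    rw [htot x hx] at this
    simp at this)
  have hle : ∀ j ∈ univ, ∑ i, g i j x ≤ 1 := by
    intro j _
    rcases hxA j with h0 | h1
    · simp [g, h0]
    · exact h1.2
  have hcol : ∀ j, ∑ i, g i j x = 1 := fun j =>
    (sum_eq_sum_iff_of_le hle).1 (by rw [htot x hx]; simp) j (mem_univ j)
  obtain ⟨π, hπ⟩ := exists_perm_pos_of_mem_doublyStochastic
    (M := Matrix.of fun i j => g i j x)
    (mem_doublyStochastic_iff_sum.2 ⟨fun i j => hg0 i j x hx, fun i => hrow i x hx, hcol⟩)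
  refine ⟨π, x, hx, fun i => hnear i (π i) x ?_⟩
  refine lt_of_le_of_ne (hnonneg _ _ _) fun h0 => ?_
  have := hπ i
  simp [g, ← h0] at this

/-- Gale's Rainbow-KKM lemma: given `n` KKM coverings of the standard simplex, there exist a
permutation `π` and a point `x` of the simplex with `x ∈ C^i_{π(i)}` for every `i`. -/
theorem rainbow_kkm (n : ℕ) (hn : 1 ≤ n) (C : Fin n → Fin n → Set (Fin n → ℝ))
    (hC : ∀ i, IsKKMCovering (C i)) :
    ∃ (π : Equiv.Perm (Fin n)) (x : Fin n → ℝ),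
      x ∈ stdSimplex ℝ (Fin n) ∧ ∀ i, x ∈ C i (π i) := by
  choose π x hx hnear using fun k : ℕ =>
    exists_perm_approx hn C hC (ε := 1 / ((k : ℝ) + 1)) (by positivity)
  obtain ⟨w, hw, φ, hφ, hlim⟩ := (isCompact_stdSimplex (𝕜 := ℝ) (Fin n)).tendsto_subseq hx
  -- some permutation occurs infinitely often along the subsequence
  obtain ⟨τ, hτ⟩ := Finite.exists_infinite_fiber (fun k => π (φ k))
  have hfreq : ∃ᶠ k in Filter.atTop, π (φ k) = τ :=
    Nat.frequently_atTop_iff_infinite.2 (Set.infinite_coe_iff.1 hτ)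
  refine ⟨τ, w, hw, fun i => ?_⟩
  rw [← ((hC i).1 (τ i)).closure_eq, Metric.mem_closure_iff]
  intro ε hε
  have hsmall : Filter.Tendsto (fun k => 1 / ((φ k : ℝ) + 1)) Filter.atTop (nhds 0) :=
    (tendsto_const_div_succ 1).comp hφ.tendsto_atTop
  obtain ⟨k, rfl, h1, h2⟩ := (hfreq.and_eventually
    ((hsmall.eventually_lt_const (half_pos hε)).and
      (Metric.tendsto_nhds.1 hlim _ (half_pos hε)))).exists
  obtain ⟨y, hy, hxy⟩ := hnear (φ k) i
  refine ⟨y, hy, ?_⟩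
  have := dist_triangle_left w y (x (φ k))
  simp only [Function.comp_apply] at h2
  linarith
end

section
/- (Gale's equilibrium existence theorem for the housing market.) Let n ≥ 1 and suppose that for each agent i ∈ {1,…,n}, (P^i_1,…,P^i_n) is a family of preference sets: each P^i_j ⊆ ℝ^n is closed, p ∉ P^i_j whenever p_j ≥ 1, and Σ_n ⊆ ∪_{j=1}^n P^i_j. Then there exist a price vector p ∈ Σ_n and a permutation π of {1,…,n} such that p ∈ P^i_{π(i)} for every i ∈ {1,…,n}. -/
/-!
The proof is a Sperner-type argument on the cyclically symmetric triangulation of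
`ℤⁿ / ℤ(1,…,1)`. A simplex is a pair `(x, σ)`; its `k`-th vertex adds to `x` the unit vectors
`e_{σ 0}, …, e_{σ (k-1)}`, and it belongs to agent `k`, so every simplex has exactly one vertex per
agent. A lattice point `x` is read, at mesh `1/N`, as the price vector `min ((x - min x)/N) 1`,
which lies in `Σ_n`, and agent `k` labels a vertex by a good preferred at that price. A rainbow
simplex (all labels distinct) gives a permutation and `n` nearby price vectors, one in each required
preference set; letting `N → ∞` and using compactness of `Σ_n` finishes the proof.

Rainbow simplices exist by a signed count (`exists_rainbow`). Let `M(s)` be the 0/1 matrix of labels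
of a simplex `s`; it has row sums one, so `det M(s)` is the sum over `k` of the cofactors
`adj M(s) 0 k`. That cofactor ignores row `k`, hence is unchanged when `s` is reflected in the facet
opposite vertex `k`, whereas `sign σ` flips. Therefore `∑ sign σ * det M(s)` is the same for two
labellings that agree far from the origin. For the labelling by the first minimal coordinate exactly
one simplex is rainbow and the sum is `1`; so it is nonzero for every labelling agreeing with that
one far away. The condition `p ∉ P_j` for `p_j ≥ 1` guarantees that replacing the labels far away by
the first minimal coordinate creates no new rainbow simplices.
-/

/-- `Σ_n`: the set of price vectors `p` with `0 ≤ p_i ≤ 1` for all `i` and `p_j = 0` for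
some `j`. -/
def SigmaN (n : ℕ) : Set (Fin n → ℝ) :=
  {p | (∀ i, 0 ≤ p i ∧ p i ≤ 1) ∧ ∃ j, p j = 0}

namespace Housing

open Matrix

variable {m : ℕ}

/-! ### The first minimal coordinate -/

lemma exists_argmin (x : Fin (m + 1) → ℤ) :
    ∃ a, (∀ i, x a ≤ x i) ∧ ∀ i, x i ≤ x a → a ≤ i := by
  obtain ⟨a, -, ha⟩ := Finset.exists_min_image Finset.univ
    (fun i => toLex (x i, i)) Finset.univ_nonempty
  have h : ∀ i, x a < x i ∨ x a = x i ∧ a ≤ i := fun i => by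
    simpa [Prod.Lex.toLex_le_toLex] using ha i (Finset.mem_univ i)
  refine ⟨a, fun i => ?_, fun i hi => ?_⟩
  · rcases h i with h | h
    · exact h.le
    · exact h.1.le
  · rcases h i with h | h
    · omega
    · exact h.2

/-- The least index at which `x` attains its minimum. -/
noncomputable def argmin (x : Fin (m + 1) → ℤ) : Fin (m + 1) := (exists_argmin x).choose

lemma argmin_le (x : Fin (m + 1) → ℤ) (i) : x (argmin x) ≤ x i :=
  (exists_argmin x).choose_spec.1 i

lemma argmin_first (x : Fin (m + 1) → ℤ) (i) (h : x i ≤ x (argmin x)) : argmin x ≤ i :=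
  (exists_argmin x).choose_spec.2 i h

lemma argmin_eq {x : Fin (m + 1) → ℤ} {a} (h1 : ∀ i, x a ≤ x i)
    (h2 : ∀ i, x i ≤ x a → a ≤ i) : argmin x = a :=
  le_antisymm (argmin_first x a (h1 _)) (h2 _ (argmin_le x a))

/-! ### The triangulation -/

/-- A simplex: base point `x` and the order `σ` in which the coordinates are raised by one. -/
abbrev Simp (m : ℕ) := (Fin (m + 1) → ℤ) × Equiv.Perm (Fin (m + 1))

/-- The `k`-th vertex `x + e_{σ 0} + ⋯ + e_{σ (k-1)}` of the simplex `(x, σ)`. -/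
def vtx (s : Simp m) (k : Fin (m + 1)) : Fin (m + 1) → ℤ :=
  fun i => s.1 i + if s.2.symm i < k then 1 else 0

/-- The cyclic predecessor on `Fin (m + 1)`. -/
def prd (k : Fin (m + 1)) : Fin (m + 1) :=
  if k = 0 then Fin.last m else ⟨k.1 - 1, by omega⟩

lemma prd_ne (hm : m ≠ 0) (k : Fin (m + 1)) : prd k ≠ k := by
  unfold prd
  split_ifs with h
  · subst h
    intro h
    exact hm (by simpa using congrArg Fin.val h)
  · intro h'
    have h1 := congrArg Fin.val h'
    have : k.1 ≠ 0 := fun h2 => h (Fin.ext h2)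
    simp only at h1
    omega

/-- The change of base point when a simplex with order `σ` is reflected in the facet opposite
vertex `k`; only replacing vertex `0` moves it. -/
def shift (σ : Equiv.Perm (Fin (m + 1))) (k i : Fin (m + 1)) : ℤ :=
  if k = 0 then (if σ.symm i = 0 then 1 else 0) - (if σ.symm i = Fin.last m then 1 else 0) else 0

/-- The reflection of a simplex in its facet opposite vertex `k`. -/
def flip (k : Fin (m + 1)) (s : Simp m) : Simp m :=
  (fun i => s.1 i + shift s.2 k i, s.2 * Equiv.swap (prd k) k)

lemma flip_symm (k : Fin (m + 1)) (s : Simp m) (i) :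
    (flip k s).2.symm i = Equiv.swap (prd k) k (s.2.symm i) := by
  simp [flip, Equiv.Perm.mul_def]

lemma flip_flip (k : Fin (m + 1)) (s : Simp m) : flip k (flip k s) = s := by
  have h2 : (flip k (flip k s)).2 = s.2 := by
    simp [flip, mul_assoc]
  refine Prod.ext (funext fun i => ?_) h2
  change s.1 i + shift s.2 k i + shift (flip k s).2 k i = s.1 i
  unfold shift
  rw [flip_symm]
  by_cases hk : k = 0
  · subst hk
    have hp : prd (0 : Fin (m + 1)) = Fin.last m := by simp [prd]
    simp only [hp, if_true]
    rw [Equiv.swap_apply_def]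
    split_ifs <;> omega
  · simp [hk]

/-- The reflection opposite vertex `k` as a permutation of the simplices. -/
def flipEquiv (k : Fin (m + 1)) : Simp m ≃ Simp m :=
  ⟨flip k, flip k, flip_flip k, flip_flip k⟩

lemma vtx_flip (k j : Fin (m + 1)) (hj : j ≠ k) (s : Simp m) :
    vtx (flip k s) j = vtx s j := by
  funext i
  unfold vtx
  rw [flip_symm]
  change s.1 i + shift s.2 k i + _ = _
  unfold shift
  generalize s.2.symm i = a
  have hjk : j.1 ≠ k.1 := fun h => hj (Fin.ext h)
  have hj' := j.2
  have ha' := a.2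
  rw [Equiv.swap_apply_def]
  unfold prd
  by_cases hk : k = 0
  · subst hk
    simp only [if_true, Fin.ext_iff, Fin.lt_def, Fin.val_last, Fin.val_zero] at *
    split_ifs <;> (try simp only [Fin.val_last, Fin.val_zero] at *) <;> omega
  · have hk' : k.1 ≠ 0 := fun h => hk (Fin.ext h)
    simp only [hk, if_false, Fin.ext_iff, Fin.lt_def]
    split_ifs <;> (try simp only at *) <;> omega

/-- The orientation of a simplex, set to `0` unless the base point has coordinate sum `0`: this
selects one representative from each class modulo the all-ones vector. -/
def wt (s : Simp m) : ℤ := if ∑ i, s.1 i = 0 then (Equiv.Perm.sign s.2 : ℤ) else 0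

lemma sum_shift (σ : Equiv.Perm (Fin (m + 1))) (k : Fin (m + 1)) : ∑ i, shift σ k i = 0 := by
  unfold shift
  split_ifs
  · rw [Equiv.sum_comp σ.symm
      (fun a => (if a = 0 then (1 : ℤ) else 0) - (if a = Fin.last m then 1 else 0))]
    simp
  · simp

lemma wt_flip (hm : m ≠ 0) (k : Fin (m + 1)) (s : Simp m) : wt (flip k s) = - wt s := by
  have h : ∑ i, (flip k s).1 i = ∑ i, s.1 i := by
    simp [flip, Finset.sum_add_distrib, sum_shift]
  unfold wt
  rw [h]
  split_ifs
  · simp [flip, Equiv.Perm.sign_swap (prd_ne hm k)]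
  · simp

/-! ### The signed count of rainbow simplices -/

/-- The 0/1 matrix whose `k`-th row marks the label of the `k`-th vertex of `s`. -/
def lab (L : Fin (m + 1) → (Fin (m + 1) → ℤ) → Fin (m + 1)) (s : Simp m) :
    Matrix (Fin (m + 1)) (Fin (m + 1)) ℤ :=
  fun k j => if L k (vtx s k) = j then 1 else 0

lemma det_lab (L : Fin (m + 1) → (Fin (m + 1) → ℤ) → Fin (m + 1)) (s : Simp m) :
    (lab L s).det = ∑ k, (lab L s).adjugate 0 k := by
  have h1 : lab L s *ᵥ 1 = 1 := by
    funext k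
    simp [Matrix.mulVec, dotProduct, lab]
  have h2 : ((lab L s).adjugate *ᵥ (lab L s *ᵥ 1)) 0 = (lab L s).det := by
    rw [Matrix.mulVec_mulVec, Matrix.adjugate_mul, Matrix.smul_mulVec]
    simp
  rw [h1] at h2
  rw [← h2]
  simp [Matrix.mulVec, dotProduct]

lemma adj_flip (L : Fin (m + 1) → (Fin (m + 1) → ℤ) → Fin (m + 1)) (s : Simp m)
    (k : Fin (m + 1)) : (lab L (flip k s)).adjugate 0 k = (lab L s).adjugate 0 k := by
  rw [Matrix.adjugate_apply, Matrix.adjugate_apply]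
  congr 1
  ext a b
  by_cases h : a = k
  · subst h
    simp
  · simp [Matrix.updateRow_ne h, lab, vtx_flip k a h]

lemma det_lab_eq_zero (L : Fin (m + 1) → (Fin (m + 1) → ℤ) → Fin (m + 1)) (s : Simp m)
    (h : ¬ Function.Injective fun k => L k (vtx s k)) : (lab L s).det = 0 := by
  simp only [Function.Injective, not_forall] at h
  obtain ⟨a, b, hab, hne⟩ := h
  exact Matrix.det_zero_of_row_eq hne (by funext j; simp [lab, hab])

/-- Among simplices whose base point has coordinate sum zero, only the one with base point `0` and
identity order can be rainbow for the labelling by the first minimal coordinate. -/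
lemma rainbow_argmin (s : Simp m) (h0 : ∑ i, s.1 i = 0)
    (hinj : Function.Injective fun k => argmin (vtx s k)) : s = (0, 1) := by
  obtain ⟨x, σ⟩ := s
  -- Raising a coordinate other than the label keeps the label, so distinct labels force the
  -- coordinate raised after vertex `k` to be the label of vertex `k`.
  have key : ∀ k, argmin (vtx (x, σ) k) = σ k := by
    have hstep : ∀ k : Fin (m + 1), k ≠ Fin.last m → argmin (vtx (x, σ) k) = σ k := by
      intro k hk
      have hk' : k.1 ≠ m := fun h => hk (Fin.ext h)
      by_contra hne
      have hlt : k.1 + 1 < m + 1 := by omega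
      have hv : ∀ i, vtx (x, σ) ⟨k.1 + 1, hlt⟩ i
          = vtx (x, σ) k i + if i = σ k then 1 else 0 := by
        intro i
        have e : i = σ k ↔ σ.symm i = k := by rw [Equiv.symm_apply_eq]
        simp only [vtx, e, Fin.lt_def, Fin.ext_iff]
        split_ifs <;> omega
      have hc : argmin (vtx (x, σ) ⟨k.1 + 1, hlt⟩) = argmin (vtx (x, σ) k) := by
        apply argmin_eq
        · intro i
          rw [hv, hv, if_neg hne]
          have := argmin_le (vtx (x, σ) k) i
          split_ifs <;> omega
        · intro i hi
          rw [hv, hv, if_neg hne] at hi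
          apply argmin_first
          split_ifs at hi <;> omega
      have h2 := congrArg Fin.val (hinj hc)
      simp only at h2
      omega
    -- Both sides are permutations, so agreement off the last index gives agreement there too.
    intro k
    by_cases hk : k = Fin.last m
    · obtain ⟨k', hk'⟩ := (Finite.injective_iff_surjective.mp hinj) (σ k)
      simp only at hk'
      by_cases hl : k' = Fin.last m
      · rw [hk, ← hl]; rw [hk', hk, hl]
      · exact absurd (σ.injective ((hstep k' hl).symm.trans hk')) (by rw [hk]; exact hl)
    · exact hstep k hk
  have hval : ∀ k i, x (σ k) ≤ vtx (x, σ) k i := by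
    intro k i
    have := argmin_le (vtx (x, σ) k) i
    rw [key k] at this
    simpa [vtx] using this
  have hlow : ∀ i, x (σ 0) ≤ x i := fun i => by simpa [vtx] using hval 0 i
  have hup : ∀ i, x i ≤ x (σ 0) + 1 := by
    intro i
    have := hval (σ.symm i) (σ 0)
    simp only [vtx, Equiv.apply_symm_apply] at this
    split_ifs at this <;> omega
  -- The coordinates lie in `{c, c + 1}` with `c = x (σ 0)` attained, and sum to zero.
  have hc0 : x (σ 0) = 0 := by
    have h1 : ∑ i : Fin (m + 1), x (σ 0) ≤ ∑ i, x i := Finset.sum_le_sum fun i _ => hlow i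
    have h2 : ∑ i, x i < ∑ i : Fin (m + 1), (x (σ 0) + 1) :=
      Finset.sum_lt_sum (fun i _ => hup i) ⟨σ 0, Finset.mem_univ _, by omega⟩
    simp only at h0
    rw [h0] at h1 h2
    simp only [Finset.sum_const, Finset.card_univ, Fintype.card_fin, nsmul_eq_mul] at h1 h2
    push_cast at h1 h2
    have hp : (0 : ℤ) < (m : ℤ) + 1 := by positivity
    have h3 : x (σ 0) ≤ 0 := by nlinarith
    have h4 : 0 < x (σ 0) + 1 := by
      by_contra hcon
      nlinarith
    omega
  have hx : x = 0 := by
    funext i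
    have h1 : ∀ i ∈ Finset.univ, 0 ≤ x i := fun i _ => by
      have := hlow i
      omega
    exact (Finset.sum_eq_zero_iff_of_nonneg h1).mp h0 i (Finset.mem_univ i)
  subst hx
  have hmono : Monotone σ := by
    intro a b hab
    have h := argmin_first (vtx (0, σ) a) (σ b)
    rw [key a] at h
    apply h
    simp [vtx, not_lt.mpr hab]
  have hσ : StrictMono σ := hmono.strictMono_of_injective σ.injective
  refine Prod.ext rfl (Equiv.ext fun i => ?_)
  have := Subsingleton.elim (hσ.orderIsoOfSurjective σ σ.surjective) (OrderIso.refl _)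
  exact congrArg (fun e : Fin (m + 1) ≃o Fin (m + 1) => e i) this

lemma det_argmin : (lab (fun _ => argmin) ((0, 1) : Simp m)).det = 1 := by
  have : lab (fun _ => argmin) ((0, 1) : Simp m) = 1 := by
    ext k j
    have hv : ∀ i, vtx ((0, 1) : Simp m) k i = if i < k then 1 else 0 := fun i => zero_add _
    have h : argmin (vtx ((0, 1) : Simp m) k) = k := by
      apply argmin_eq
      · intro i
        simp only [hv, lt_irrefl, if_false]
        split_ifs <;> omega
      · intro i hi
        by_contra hcon
        simp [hv, not_le.mp hcon] at hi
    simp [lab, h, Matrix.one_apply]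
  rw [this, Matrix.det_one]

/-- Two labellings that agree off a bounded set have the same signed count, so a labelling that is
given by the first minimal coordinate far away has a rainbow simplex. -/
lemma exists_rainbow (hm : m ≠ 0) (N : ℕ)
    (L : Fin (m + 1) → (Fin (m + 1) → ℤ) → Fin (m + 1))
    (hL : ∀ k (x : Fin (m + 1) → ℤ) i j, x i + N < x j → L k x = argmin x) :
    ∃ s : Simp m, Function.Injective fun k => L k (vtx s k) := by
  by_contra! hno
  set L0 : Fin (m + 1) → (Fin (m + 1) → ℤ) → Fin (m + 1) := fun _ => argmin with hL0
  let h : Fin (m + 1) → Simp m → ℤ := fun k s =>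
    wt s * ((lab L s).adjugate 0 k - (lab L0 s).adjugate 0 k)
  have hfin : ∀ k, (Function.support (h k)).Finite := by
    intro k
    refine Set.Finite.subset (Set.Finite.prod
      (Set.finite_Icc (fun _ : Fin (m + 1) => -((N : ℤ) + 1)) (fun _ => (N : ℤ) + 1))
      (Set.finite_univ : (Set.univ : Set (Equiv.Perm (Fin (m + 1)))).Finite)) ?_
    intro s hs
    have hs' : wt s * ((lab L s).adjugate 0 k - (lab L0 s).adjugate 0 k) ≠ 0 := hs
    have hsum : ∑ i, s.1 i = 0 := by
      by_contra hc
      exact hs' (by simp [wt, hc])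
    have hne : lab L s ≠ lab L0 s := fun he => hs' (by rw [he]; simp)
    have hex : ∃ a, L a (vtx s a) ≠ argmin (vtx s a) := by
      by_contra! hc
      exact hne (by ext a b; simp [lab, hL0, hc])
    obtain ⟨a, ha⟩ := hex
    have hspread : ∀ i j, s.1 j ≤ s.1 i + (N + 1) := by
      intro i j
      have h1 : ¬ (vtx s a i + N < vtx s a j) := fun hc => ha (hL a _ i j hc)
      simp only [vtx] at h1
      split_ifs at h1 <;> omega
    obtain ⟨i, -, hi⟩ : ∃ i ∈ Finset.univ, s.1 i ≤ 0 :=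
      Finset.exists_le_of_sum_le (s := Finset.univ) (f := s.1) (g := fun _ => 0)
        Finset.univ_nonempty (by simp [hsum])
    obtain ⟨j, -, hj⟩ : ∃ i ∈ Finset.univ, 0 ≤ s.1 i :=
      Finset.exists_le_of_sum_le (s := Finset.univ) (g := s.1) (f := fun _ => 0)
        Finset.univ_nonempty (by simp [hsum])
    refine ⟨⟨fun b => ?_, fun b => ?_⟩, Set.mem_univ _⟩
    · have := hspread b j
      change -((N : ℤ) + 1) ≤ s.1 b
      omega
    · have := hspread i b
      change s.1 b ≤ (N : ℤ) + 1
      omega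
  have hzero : ∀ k, ∑ᶠ s, h k s = 0 := by
    intro k
    have h1 : ∑ᶠ s, h k (flipEquiv k s) = ∑ᶠ s, h k s := finsum_comp_equiv (flipEquiv k)
    have h2 : ∀ s, h k (flipEquiv k s) = - h k s := by
      intro s
      change wt (flip k s) * ((lab L (flip k s)).adjugate 0 k
        - (lab L0 (flip k s)).adjugate 0 k) = -(wt s * _)
      rw [wt_flip hm, adj_flip, adj_flip, neg_mul]
    rw [finsum_congr h2, finsum_neg_distrib] at h1
    omega
  have htot : ∑ᶠ s, ∑ k, h k s = 0 := by
    rw [finsum_sum_comm _ _ (fun k _ => hfin k)]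
    exact Finset.sum_eq_zero fun k _ => hzero k
  have hdet : ∀ s : Simp m, ∑ k, h k s = - (wt s * (lab L0 s).det) := by
    intro s
    change ∑ k, wt s * ((lab L s).adjugate 0 k - (lab L0 s).adjugate 0 k) = _
    rw [← Finset.mul_sum, Finset.sum_sub_distrib, ← det_lab, ← det_lab,
      det_lab_eq_zero L s (hno s)]
    ring
  rw [finsum_congr hdet, finsum_eq_single _ ((0, 1) : Simp m)] at htot
  · rw [hL0, det_argmin] at htot
    simp [wt] at htot
  · intro s hs
    by_cases hsum : ∑ i, s.1 i = 0
    · rw [det_lab_eq_zero L0 s fun hi => hs (rainbow_argmin s hsum hi)]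
      simp
    · simp [wt, hsum]

/-! ### Prices on the lattice -/

/-- The price vector in `Σ_n` represented by the lattice point `x` at mesh `1 / N`. -/
noncomputable def price (N : ℕ) (x : Fin (m + 1) → ℤ) : Fin (m + 1) → ℝ :=
  fun i => min (((x i - x (argmin x) : ℤ) : ℝ) / N) 1

lemma price_mem (N : ℕ) (x : Fin (m + 1) → ℤ) : price N x ∈ SigmaN (m + 1) := by
  refine ⟨fun i => ⟨le_min ?_ zero_le_one, min_le_right _ _⟩, argmin x, by simp [price]⟩
  have : (0 : ℤ) ≤ x i - x (argmin x) := by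
    have := argmin_le x i
    omega
  have h2 : (0 : ℝ) ≤ ((x i - x (argmin x) : ℤ) : ℝ) := by exact_mod_cast this
  positivity

lemma price_dist {N : ℕ} (s : Simp m) (k i) :
    |price N (vtx s k) i - price N (vtx s 0) i| ≤ 1 / N := by
  have hz : ∀ j, vtx s 0 j = s.1 j := by simp [vtx]
  have h1 : ∀ j, s.1 j ≤ vtx s k j ∧ vtx s k j ≤ s.1 j + 1 := by
    intro j
    simp only [vtx]
    split_ifs <;> omega
  have hI : |(vtx s k i - vtx s k (argmin (vtx s k)))
      - (vtx s 0 i - vtx s 0 (argmin (vtx s 0)))| ≤ (1 : ℤ) := by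
    have a1 := argmin_le (vtx s k) (argmin (vtx s 0))
    have a2 := argmin_le (vtx s 0) (argmin (vtx s k))
    have b1 := h1 i
    have b2 := h1 (argmin (vtx s 0))
    have b3 := h1 (argmin (vtx s k))
    simp only [hz] at *
    rw [abs_le]
    constructor <;> omega
  have hR : |((vtx s k i - vtx s k (argmin (vtx s k)) : ℤ) : ℝ)
      - ((vtx s 0 i - vtx s 0 (argmin (vtx s 0)) : ℤ) : ℝ)| ≤ 1 := by exact_mod_cast hI
  unfold price
  refine (abs_min_sub_min_le_max _ _ _ _).trans (max_le ?_ (by simp))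
  rw [← sub_div, abs_div, Nat.abs_cast]
  gcongr

/-- The approximate equilibrium at mesh `1 / N`. -/
lemma approx (hm : m ≠ 0) (P : Fin (m + 1) → Fin (m + 1) → Set (Fin (m + 1) → ℝ))
    (hbound : ∀ i j (p : Fin (m + 1) → ℝ), 1 ≤ p j → p ∉ P i j)
    (hcover : ∀ i, SigmaN (m + 1) ⊆ ⋃ j, P i j) (N : ℕ) (hN : 0 < N) :
    ∃ (s : Simp m) (π : Equiv.Perm (Fin (m + 1))), ∀ k, price N (vtx s k) ∈ P k (π k) := by
  classical
  have hch : ∀ k (x : Fin (m + 1) → ℤ), ∃ j, price N x ∈ P k j := fun k x => by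
    simpa using hcover k (price_mem N x)
  choose L hL using hch
  let L' : Fin (m + 1) → (Fin (m + 1) → ℤ) → Fin (m + 1) := fun k x =>
    if ∃ i j, x i + N < x j then argmin x else L k x
  have hNR : (0 : ℝ) < N := by exact_mod_cast hN
  -- A good whose price is at least `1` is chosen by neither rule.
  have hL' : ∀ k (x : Fin (m + 1) → ℤ) i, x i + N ≤ x (L' k x) → False := by
    intro k x i hi
    by_cases hc : ∃ i j, x i + N < x j
    · simp only [L', if_pos hc] at hi
      have := argmin_le x i
      omega
    · simp only [L', if_neg hc] at hi
      refine hbound k (L k x) (price N x) (le_min ?_ le_rfl) (hL k x)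
      rw [le_div_iff₀ hNR, one_mul]
      have h1 := argmin_le x i
      have h2 : (N : ℤ) ≤ x (L k x) - x (argmin x) := by omega
      exact_mod_cast h2
  obtain ⟨s, hs⟩ := exists_rainbow hm N L' (by
    intro k x i j hij
    exact if_pos ⟨i, j, hij⟩)
  have hsurj := Finite.injective_iff_surjective.mp hs
  have hin : ∀ k, L' k (vtx s k) = L k (vtx s k) := by
    intro k
    refine if_neg ?_
    rintro ⟨i, j, hij⟩
    obtain ⟨k', hk'⟩ := hsurj j
    simp only at hk'
    refine hL' k' (vtx s k') i ?_
    rw [hk']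
    simp only [vtx] at hij ⊢
    -- Differences of coordinates vary by at most one over a simplex.
    split_ifs at hij ⊢ <;> simp only [Fin.lt_def] at * <;> omega
  refine ⟨s, Equiv.ofBijective _ ⟨hs, hsurj⟩, fun k => ?_⟩
  simp only [Equiv.ofBijective_apply, hin]
  exact hL k _

lemma isCompact_sigma (n : ℕ) : IsCompact (SigmaN n) := by
  have : SigmaN n = Set.Icc 0 1 ∩ ⋃ j, {p : Fin n → ℝ | p j = 0} := by
    ext p
    simp [SigmaN, Pi.le_def, forall_and]
  rw [this]
  refine isCompact_Icc.inter_right (isClosed_iUnion_of_finite fun j => ?_)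
  exact isClosed_eq (continuous_apply j) continuous_const

open Filter Topology in
lemma main (hm : m ≠ 0) (P : Fin (m + 1) → Fin (m + 1) → Set (Fin (m + 1) → ℝ))
    (hclosed : ∀ i j, IsClosed (P i j))
    (hbound : ∀ i j (p : Fin (m + 1) → ℝ), 1 ≤ p j → p ∉ P i j)
    (hcover : ∀ i, SigmaN (m + 1) ⊆ ⋃ j, P i j) :
    ∃ p ∈ SigmaN (m + 1), ∃ π : Equiv.Perm (Fin (m + 1)), ∀ i, p ∈ P i (π i) := by
  have happ := fun N : ℕ => approx hm P hbound hcover (N + 1) N.succ_pos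
  choose s π hπ using happ
  let U : Ultrafilter ℕ := hyperfilter ℕ
  have hU : (U : Filter ℕ) ≤ atTop := by
    rw [← Nat.cofinite_eq_atTop]
    exact hyperfilter_le_cofinite
  obtain ⟨p, hp, hlim⟩ := (isCompact_sigma (m + 1)).ultrafilter_le_nhds
    (U.map fun N : ℕ => price (N + 1) (vtx (s N) 0))
    (by
      rw [le_principal_iff]
      exact Ultrafilter.mem_map.mpr (Filter.univ_mem' fun N => price_mem (N + 1) _))
  have hlim' : Tendsto (fun N => price (N + 1) (vtx (s N) 0)) U (𝓝 p) := hlim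
  obtain ⟨π₀, hπ₀⟩ := Ultrafilter.eq_pure_of_finite (U.map π)
  have hev : ∀ᶠ N in (U : Filter ℕ), π N = π₀ := by
    have : ({π₀} : Set (Equiv.Perm (Fin (m + 1)))) ∈ U.map π := by
      rw [hπ₀]
      exact Set.mem_singleton π₀
    exact this
  refine ⟨p, hp, π₀, fun k => ?_⟩
  have hk : Tendsto (fun N => price (N + 1) (vtx (s N) k)) U (𝓝 p) := by
    rw [tendsto_pi_nhds] at hlim' ⊢
    intro i
    have hd : Tendsto (fun N => price (N + 1) (vtx (s N) k) i - price (N + 1) (vtx (s N) 0) i)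
        U (𝓝 0) := by
      refine squeeze_zero_norm (a := fun N : ℕ => 1 / ((N : ℝ) + 1)) (fun N => ?_)
        (tendsto_one_div_add_atTop_nhds_zero_nat.mono_left hU)
      have := price_dist (N := N + 1) (s N) k i
      rw [Real.norm_eq_abs]
      exact_mod_cast this
    simpa using hd.add (hlim' i)
  refine (hclosed k (π₀ k)).mem_of_tendsto hk ?_
  filter_upwards [hev] with N hN
  rw [← hN]
  exact hπ N k

end Housing

/-- Gale's equilibrium existence theorem for the housing market: if every agent `i` has
preference sets `P i j` (each closed, with `p ∉ P i j` whenever `p j ≥ 1`, and covering `Σ_n`),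
then there is a price vector `p ∈ Σ_n` and a permutation `π` with `p ∈ P i (π i)` for all `i`. -/
theorem housing_market_equilibrium (n : ℕ) (hn : 1 ≤ n)
    (P : Fin n → Fin n → Set (Fin n → ℝ))
    (hclosed : ∀ i j, IsClosed (P i j))
    (hbound : ∀ i j (p : Fin n → ℝ), 1 ≤ p j → p ∉ P i j)
    (hcover : ∀ i, SigmaN n ⊆ ⋃ j, P i j) :
    ∃ p ∈ SigmaN n, ∃ π : Equiv.Perm (Fin n), ∀ i, p ∈ P i (π i) := by
  obtain ⟨m, rfl⟩ : ∃ m, n = m + 1 := ⟨n - 1, by omega⟩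
  by_cases hm : m = 0
  · subst hm
    have h0 : (0 : Fin (0 + 1) → ℝ) ∈ SigmaN (0 + 1) := ⟨fun i => by simp, 0, rfl⟩
    refine ⟨0, h0, 1, fun i => ?_⟩
    obtain ⟨j, hj⟩ := Set.mem_iUnion.mp (hcover i h0)
    have hij : j = (1 : Equiv.Perm (Fin (0 + 1))) i := by
      apply Fin.ext
      omega
    rwa [hij] at hj
  · exact Housing.main hm P hclosed hbound hcover
end

section
/- For every integer n ≥ 1, the map φ is a well-defined bijection from Σ_n onto Δ_{n−1}, the map φ^{-1} is its two-sided inverse (φ^{-1}(φ(p)) = p for all p ∈ Σ_n and φ(φ^{-1}(x)) = x for all x ∈ Δ_{n−1}), and φ(Σ_π) = Δ_π for every permutation π of {1,…,n}. -/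
/-- The values of `p` read in the order given by the permutation `π` (0-based), extended by
`0` beyond index `n`. -/
def seqOf {n : ℕ} (π : Equiv.Perm (Fin n)) (p : Fin n → ℝ) : ℕ → ℝ :=
  fun j => if h : j < n then p (π ⟨j, h⟩) else 0

/-- `Σ_π = {p ∈ Σ_n : p_{π(1)} ≥ p_{π(2)} ≥ ⋯ ≥ p_{π(n)} = 0}`. -/
def SigmaPerm {n : ℕ} (π : Equiv.Perm (Fin n)) : Set (Fin n → ℝ) :=
  {p | p ∈ SigmaN n ∧ (∀ j, j + 1 < n → seqOf π p (j + 1) ≤ seqOf π p j) ∧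
    seqOf π p (n - 1) = 0}

/-- `Δ_π = {x ∈ Δ_{n-1} : x_{π(1)} ≤ x_{π(2)} ≤ ⋯ ≤ x_{π(n)}}`. -/
def DeltaPerm {n : ℕ} (π : Equiv.Perm (Fin n)) : Set (Fin n → ℝ) :=
  {x | x ∈ stdSimplex ℝ (Fin n) ∧ ∀ j, j + 1 < n → seqOf π x j ≤ seqOf π x (j + 1)}

/-- The defining formula for `φ(p)_{π(k)}` on `Σ_π` (with `k` 0-based):
`φ(p)_{π(k)} = (1 - p_{π(1)})/n + ∑_{l=2}^{k} (p_{π(l-1)} - p_{π(l)})/(n - l + 1)`. -/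
noncomputable def phiFormula {n : ℕ} (π : Equiv.Perm (Fin n)) (p : Fin n → ℝ) (k : Fin n) : ℝ :=
  (1 - seqOf π p 0) / n +
    ∑ j ∈ Finset.range k.val, (seqOf π p j - seqOf π p (j + 1)) / ((n : ℝ) - j - 1)

/-- The defining formula for `φ⁻¹(x)_{π(k)}` on `Δ_π` (with `k` 0-based):
`φ⁻¹(x)_{π(k)} = 1 - x_{π(1)} - ⋯ - x_{π(k-1)} - (n - k + 1)·x_{π(k)}`. -/
noncomputable def psiFormula {n : ℕ} (π : Equiv.Perm (Fin n)) (x : Fin n → ℝ) (k : Fin n) : ℝ :=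
  1 - (∑ j ∈ Finset.range k.val, seqOf π x j) - ((n : ℝ) - k.val) * seqOf π x k.val

/-- The permutation-free form of `φ⁻¹`: `x ↦ (1 - ∑ j, min (x j) (x i))_i`. -/
noncomputable def waterMap {n : ℕ} (x : Fin n → ℝ) (i : Fin n) : ℝ :=
  1 - ∑ j, min (x j) (x i)

/-- The vector whose coordinate at `π k` is `phiFormula π p k`. -/
noncomputable def phiVec {n : ℕ} (π : Equiv.Perm (Fin n)) (p : Fin n → ℝ) (i : Fin n) : ℝ :=
  phiFormula π p (π.symm i)

lemma seqOf_of_lt {n : ℕ} (π : Equiv.Perm (Fin n)) (p : Fin n → ℝ) {j : ℕ} (h : j < n) :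
    seqOf π p j = p (π ⟨j, h⟩) := by
  simp [seqOf, h]

lemma seqOf_fin {n : ℕ} (π : Equiv.Perm (Fin n)) (p : Fin n → ℝ) (k : Fin n) :
    seqOf π p k = p (π k) := seqOf_of_lt π p k.2

lemma sum_eq_sum_seqOf {n : ℕ} (π : Equiv.Perm (Fin n)) (x : Fin n → ℝ) :
    ∑ i, x i = ∑ j ∈ Finset.range n, seqOf π x j := by
  rw [← Equiv.sum_comp π, ← Fin.sum_univ_eq_sum_range]
  simp only [seqOf_fin]

lemma seqOf_mono {n : ℕ} {π : Equiv.Perm (Fin n)} {x : Fin n → ℝ}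
    (hx : ∀ j, j + 1 < n → seqOf π x j ≤ seqOf π x (j + 1)) {j m : ℕ} (hjm : j ≤ m) :
    m < n → seqOf π x j ≤ seqOf π x m := by
  induction m, hjm using Nat.le_induction with
  | base => intro _; exact le_rfl
  | succ m _ ih => intro h; exact (ih (by omega)).trans (hx m h)

lemma waterMap_eq_psiFormula {n : ℕ} {π : Equiv.Perm (Fin n)} {x : Fin n → ℝ}
    (hx : ∀ j, j + 1 < n → seqOf π x j ≤ seqOf π x (j + 1)) (k : Fin n) :
    waterMap x (π k) = psiFormula π x k := by
  have h1 : ∑ j, min (x j) (x (π k))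
      = ∑ j ∈ Finset.range n, min (seqOf π x j) (seqOf π x k) := by
    rw [← Equiv.sum_comp π,
      ← Fin.sum_univ_eq_sum_range (fun j => min (seqOf π x j) (seqOf π x k))]
    simp only [seqOf_fin]
  have h2 : ∑ j ∈ Finset.range k.val, min (seqOf π x j) (seqOf π x k)
      = ∑ j ∈ Finset.range k.val, seqOf π x j :=
    Finset.sum_congr rfl fun j hj =>
      min_eq_left (seqOf_mono hx (Finset.mem_range.1 hj).le k.2)
  have h3 : ∑ j ∈ Finset.Ico k.val n, min (seqOf π x j) (seqOf π x k)
      = ∑ j ∈ Finset.Ico k.val n, seqOf π x k :=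
    Finset.sum_congr rfl fun j hj =>
      min_eq_right (seqOf_mono hx (Finset.mem_Ico.1 hj).1 (Finset.mem_Ico.1 hj).2)
  rw [waterMap, psiFormula, h1, ← Finset.sum_range_add_sum_Ico _ k.2.le, h2, h3,
    Finset.sum_const, Nat.card_Ico, nsmul_eq_mul, Nat.cast_sub k.2.le]
  ring

lemma waterMap_le {n : ℕ} {x : Fin n → ℝ} {i j : Fin n} (h : x i ≤ x j) :
    waterMap x j ≤ waterMap x i :=
  sub_le_sub_left (Finset.sum_le_sum fun _ _ => min_le_min_left _ h) _

lemma waterMap_lt {n : ℕ} {x : Fin n → ℝ} {i j : Fin n} (h : x i < x j) :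
    waterMap x j < waterMap x i := by
  refine sub_lt_sub_left (Finset.sum_lt_sum (fun _ _ => min_le_min_left _ h.le)
    ⟨j, Finset.mem_univ _, ?_⟩) _
  rw [min_self, min_eq_right h.le]
  exact h

lemma waterMap_mem_SigmaPerm {n : ℕ} (hn : 1 ≤ n) {π : Equiv.Perm (Fin n)} {x : Fin n → ℝ}
    (hx : x ∈ DeltaPerm π) : waterMap x ∈ SigmaPerm π := by
  obtain ⟨⟨h0, h1⟩, hm⟩ := hx
  have hlast : waterMap x (π ⟨n - 1, by omega⟩) = 0 := by
    have : ∀ j, x j ≤ x (π ⟨n - 1, by omega⟩) := fun j => by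
      have := seqOf_mono hm (j := (π.symm j).val) (m := n - 1) (by omega) (by omega)
      rwa [seqOf_fin, seqOf_of_lt π x (by omega : n - 1 < n), Equiv.apply_symm_apply] at this
    simp [waterMap, min_eq_left (this _), h1]
  refine ⟨⟨fun i => ⟨?_, ?_⟩, _, hlast⟩, fun j hj => ?_, ?_⟩
  · have : ∑ j, min (x j) (x i) ≤ ∑ j, x j := Finset.sum_le_sum fun _ _ => min_le_left _ _
    rw [waterMap]; linarith
  · have : 0 ≤ ∑ j, min (x j) (x i) := Finset.sum_nonneg fun j _ => le_min (h0 j) (h0 i)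
    rw [waterMap]; linarith
  · have := hm j hj
    rw [seqOf_of_lt _ _ hj, seqOf_of_lt _ _ (by omega : j < n)] at *
    exact waterMap_le this
  · rw [seqOf_of_lt _ _ (by omega : n - 1 < n), hlast]

lemma phiFormula_waterMap {n : ℕ} (hn : 1 ≤ n) {π : Equiv.Perm (Fin n)} {x : Fin n → ℝ}
    (hx : x ∈ DeltaPerm π) (k : Fin n) : phiFormula π (waterMap x) k = x (π k) := by
  have hq : ∀ j, j < n → seqOf π (waterMap x) j
      = 1 - (∑ i ∈ Finset.range j, seqOf π x i) - ((n : ℝ) - j) * seqOf π x j := fun j hj => by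
    rw [seqOf_of_lt _ _ hj, waterMap_eq_psiFormula hx.2, psiFormula]
  obtain ⟨k, hk⟩ := k
  rw [← seqOf_of_lt π x hk]
  induction k with
  | zero =>
    have hn0 : (n : ℝ) ≠ 0 := by positivity
    simp only [phiFormula, Finset.range_zero, Finset.sum_empty]
    rw [hq 0 hk]
    simp only [Finset.range_zero, Finset.sum_empty]
    field_simp
    push_cast
    ring
  | succ k ih =>
    have ih := ih (by omega)
    simp only [phiFormula] at ih ⊢
    rw [Finset.sum_range_succ, ← add_assoc, ih, hq k (by omega), hq (k + 1) hk,
      Finset.sum_range_succ]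
    have : ((k + 1 : ℕ) : ℝ) < n := by exact_mod_cast hk
    push_cast at this ⊢
    have : (n : ℝ) - k - 1 ≠ 0 := by linarith
    field_simp
    ring

lemma phiVec_mono {n : ℕ} {π : Equiv.Perm (Fin n)} {p : Fin n → ℝ} (hp : p ∈ SigmaPerm π)
    (j : ℕ) (hj : j + 1 < n) : seqOf π (phiVec π p) j ≤ seqOf π (phiVec π p) (j + 1) := by
  rw [seqOf_of_lt _ _ hj, seqOf_of_lt _ _ (by omega : j < n)]
  simp only [phiVec, phiFormula, Equiv.symm_apply_apply, Finset.sum_range_succ]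
  have h1 := hp.2.1 j hj
  have h2 : ((j + 1 : ℕ) : ℝ) < n := by exact_mod_cast hj
  push_cast at h2
  have : 0 ≤ (seqOf π p j - seqOf π p (j + 1)) / ((n : ℝ) - j - 1) :=
    div_nonneg (by linarith) (by linarith)
  linarith

lemma waterMap_phiVec {n : ℕ} (hn : 1 ≤ n) {π : Equiv.Perm (Fin n)} {p : Fin n → ℝ}
    (hp : p ∈ SigmaPerm π) : waterMap (phiVec π p) = p := by
  have hx : ∀ j, j < n → seqOf π (phiVec π p) j = (1 - seqOf π p 0) / n +
      ∑ i ∈ Finset.range j, (seqOf π p i - seqOf π p (i + 1)) / ((n : ℝ) - i - 1) := fun j hj => by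
    rw [seqOf_of_lt _ _ hj, phiVec, Equiv.symm_apply_apply, phiFormula]
  have key : ∀ k : Fin n, waterMap (phiVec π p) (π k) = p (π k) := by
    rintro ⟨k, hk⟩
    rw [waterMap_eq_psiFormula (phiVec_mono hp), ← seqOf_of_lt π p hk, psiFormula]
    simp only
    induction k with
    | zero =>
      have hn0 : (n : ℝ) ≠ 0 := by positivity
      rw [hx 0 hk]
      simp only [Finset.range_zero, Finset.sum_empty]
      field_simp
      push_cast
      ring
    | succ k ih =>
      have ih := ih (by omega)
      have h2 : ((k + 1 : ℕ) : ℝ) < n := by exact_mod_cast hk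
      push_cast at h2 ⊢
      have hd : (n : ℝ) - k - 1 ≠ 0 := by linarith
      have hstep : ((n : ℝ) - k - 1) *
          (seqOf π (phiVec π p) (k + 1) - seqOf π (phiVec π p) k)
          = seqOf π p k - seqOf π p (k + 1) := by
        rw [hx (k + 1) hk, hx k (by omega), Finset.sum_range_succ]
        field_simp
        ring
      rw [Finset.sum_range_succ]
      linarith
  funext i
  simpa using key (π.symm i)

lemma phiVec_mem_DeltaPerm {n : ℕ} (hn : 1 ≤ n) {π : Equiv.Perm (Fin n)} {p : Fin n → ℝ}
    (hp : p ∈ SigmaPerm π) : phiVec π p ∈ DeltaPerm π := by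
  have hm := phiVec_mono hp
  refine ⟨⟨fun i => ?_, ?_⟩, hm⟩
  · have h := seqOf_mono hm (Nat.zero_le (π.symm i).val) (π.symm i).2
    rw [seqOf_fin, Equiv.apply_symm_apply, seqOf_of_lt _ _ (by omega : 0 < n)] at h
    refine le_trans ?_ h
    simp only [phiVec, phiFormula, Equiv.symm_apply_apply, Finset.range_zero, Finset.sum_empty,
      add_zero]
    have := (hp.1.1 (π ⟨0, by omega⟩)).2
    rw [seqOf_of_lt _ _ (by omega : 0 < n)]
    exact div_nonneg (by linarith) (by positivity)
  -- For `x = phiVec π p`, the last coordinate of `φ⁻¹(x) = p` is both `p_{π(n)} = 0` and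
  -- `1 - ∑ i, x i`.
  · have h := waterMap_eq_psiFormula hm ⟨n - 1, by omega⟩
    rw [waterMap_phiVec hn hp, ← seqOf_of_lt π p (by omega), hp.2.2, psiFormula] at h
    simp only at h
    rw [sum_eq_sum_seqOf π]
    obtain ⟨m, rfl⟩ : ∃ m, n = m + 1 := ⟨n - 1, by omega⟩
    rw [Finset.sum_range_succ]
    simp only [Nat.add_sub_cancel] at h
    push_cast at h
    linarith

/-- A point of the simplex is sorted by `π` as soon as its image is, since `waterMap` strictly
reverses the order of coordinates. -/
lemma mem_DeltaPerm_of_waterMap {n : ℕ} {π : Equiv.Perm (Fin n)} {x : Fin n → ℝ}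
    (hx : x ∈ stdSimplex ℝ (Fin n)) (h : waterMap x ∈ SigmaPerm π) : x ∈ DeltaPerm π := by
  refine ⟨hx, fun j hj => ?_⟩
  have := h.2.1 j hj
  rw [seqOf_of_lt _ _ hj, seqOf_of_lt _ _ (by omega : j < n)] at *
  by_contra hlt
  exact absurd this (waterMap_lt (not_le.1 hlt)).not_ge

lemma exists_mem_DeltaPerm {n : ℕ} {x : Fin n → ℝ} (hx : x ∈ stdSimplex ℝ (Fin n)) :
    ∃ π : Equiv.Perm (Fin n), x ∈ DeltaPerm π := by
  refine ⟨Tuple.sort x, hx, fun j hj => ?_⟩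
  rw [seqOf_of_lt _ _ hj, seqOf_of_lt _ _ (by omega : j < n)]
  exact Tuple.monotone_sort x (Fin.mk_le_mk.2 (Nat.le_succ j))

lemma exists_mem_SigmaPerm {n : ℕ} {p : Fin n → ℝ} (hp : p ∈ SigmaN n) :
    ∃ π : Equiv.Perm (Fin n), p ∈ SigmaPerm π := by
  have hs := Tuple.monotone_sort (fun i => -p i)
  refine ⟨Tuple.sort (fun i => -p i), hp, fun j hj => ?_, ?_⟩
  · rw [seqOf_of_lt _ _ hj, seqOf_of_lt _ _ (by omega : j < n)]
    exact neg_le_neg_iff.1 (hs (Fin.mk_le_mk.2 (Nat.le_succ j)))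
  · obtain ⟨i, hi⟩ := hp.2
    have hin := i.2
    have hlast : n - 1 < n := by omega
    rw [seqOf_of_lt _ _ hlast]
    refine le_antisymm ?_ (hp.1 _).1
    have : (Tuple.sort (fun i => -p i)).symm i ≤ ⟨n - 1, hlast⟩ := Fin.le_def.2 (by simp; omega)
    have := hs this
    simp only [Function.comp_apply, Equiv.apply_symm_apply, hi] at this
    linarith

/-- The map `φ` is a well-defined bijection from `Σ_n` onto the standard simplex `Δ_{n-1}`, the
map `φ⁻¹` is its two-sided inverse, and `φ(Σ_π) = Δ_π` for every permutation `π`. -/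
theorem phi_bijection (n : ℕ) (hn : 1 ≤ n) :
    ∃ φ ψ : (Fin n → ℝ) → (Fin n → ℝ),
      (∀ π : Equiv.Perm (Fin n), ∀ p ∈ SigmaPerm π, ∀ k : Fin n,
        φ p (π k) = phiFormula π p k) ∧
      (∀ π : Equiv.Perm (Fin n), ∀ x ∈ DeltaPerm π, ∀ k : Fin n,
        ψ x (π k) = psiFormula π x k) ∧
      Set.BijOn φ (SigmaN n) (stdSimplex ℝ (Fin n)) ∧
      (∀ p ∈ SigmaN n, ψ (φ p) = p) ∧
      (∀ x ∈ stdSimplex ℝ (Fin n), φ (ψ x) = x) ∧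
      (∀ π : Equiv.Perm (Fin n), φ '' SigmaPerm π = DeltaPerm π) := by
  have hex : ∀ p ∈ SigmaN n, ∃ x ∈ stdSimplex ℝ (Fin n), waterMap x = p := fun p hp => by
    obtain ⟨π, hπ⟩ := exists_mem_SigmaPerm hp
    exact ⟨phiVec π p, (phiVec_mem_DeltaPerm hn hπ).1, waterMap_phiVec hn hπ⟩
  let φ : (Fin n → ℝ) → (Fin n → ℝ) := Function.invFunOn waterMap (stdSimplex ℝ (Fin n))
  have hφmem : ∀ p ∈ SigmaN n, φ p ∈ stdSimplex ℝ (Fin n) := fun p hp =>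
    Function.invFunOn_mem (hex p hp)
  have hψφ : ∀ p ∈ SigmaN n, waterMap (φ p) = p := fun p hp =>
    Function.invFunOn_eq (hex p hp)
  have hφΔ : ∀ π : Equiv.Perm (Fin n), ∀ p ∈ SigmaPerm π, φ p ∈ DeltaPerm π := fun π p hp =>
    mem_DeltaPerm_of_waterMap (hφmem p hp.1) (by rwa [hψφ p hp.1])
  have hφ : ∀ π : Equiv.Perm (Fin n), ∀ p ∈ SigmaPerm π, ∀ k : Fin n,
      φ p (π k) = phiFormula π p k := fun π p hp k => by
    rw [← phiFormula_waterMap hn (hφΔ π p hp) k, hψφ p hp.1]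
  have hφψ : ∀ x ∈ stdSimplex ℝ (Fin n), φ (waterMap x) = x := fun x hx => by
    obtain ⟨π, hπ⟩ := exists_mem_DeltaPerm hx
    funext i
    have h := hφ π _ (waterMap_mem_SigmaPerm hn hπ) (π.symm i)
    rwa [phiFormula_waterMap hn hπ, Equiv.apply_symm_apply] at h
  have hψmem : ∀ x ∈ stdSimplex ℝ (Fin n), waterMap x ∈ SigmaN n := fun x hx => by
    obtain ⟨π, hπ⟩ := exists_mem_DeltaPerm hx
    exact (waterMap_mem_SigmaPerm hn hπ).1
  refine ⟨φ, waterMap, hφ, fun π x hx k => waterMap_eq_psiFormula hx.2 k,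
    Set.InvOn.bijOn ⟨hψφ, hφψ⟩ hφmem hψmem, hψφ, hφψ, fun π => ?_⟩
  refine Set.Subset.antisymm (Set.image_subset_iff.2 fun p hp => hφΔ π p hp) fun x hx => ?_
  exact ⟨waterMap x, waterMap_mem_SigmaPerm hn hx, hφψ x hx.1⟩
end

section
/- (Stromquist's envy-free cake-cutting theorem.) Let d ≥ 1 and for each player i ∈ {1,…,d} let u^i be a utility function on subintervals of [0,1] such that u^i assigns value 0 to every degenerate interval, u^i([a,b]) > 0 whenever 0 ≤ a < b ≤ 1, and |u^i([a,b]) − u^i([a′,b′])| ≤ K(|a−a′| + |b−b′|) for all subintervals [a,b], [a′,b′] of [0,1] and some constant K. Then there exist a cut x ∈ Δ_{d−1} and a permutation π of {1,…,d} such that u^i(I_{π(i)}(x)) ≥ u^i(I_k(x)) for every player i ∈ {1,…,d} and every piece k ∈ {1,…,d}. -/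
/-!
The proof is a Sperner-type argument on the Kuhn (Freudenthal) triangulation, in which every
vertex belongs to one player.

Fix a mesh `N` and consider integer points `x` with `∑ x_i = N`; for `x ≥ 0` these are the cuts
`x / N`. Cells are cyclic sequences of points in which each step moves one unit from coordinate
`i - 1` to coordinate `i` (indices mod `d`), every `i` occurring once per turn (`IsCell`). The
weighted sum `∑ x_i • i` mod `d` grows by `1` at each step, so each cell has exactly one vertex
owned by each player. Label each vertex by a piece its owner likes best. A best piece is
nondegenerate, so a labelling of this kind picks a positive coordinate at each vertex, and
`sperner_kuhn` yields a cell whose labels are all distinct: the players prefer distinct pieces of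
cuts that are `1 / N`-close to one another. By the Lipschitz condition this is an approximately
envy-free division (`exists_approx_envy_free`), and compactness gives an exact one as `N → ∞`.

For `sperner_kuhn`, the number of fully labelled cells mod `2` is written as the sum over cells of
the determinant of the 0/1 label matrix over `ZMod 2` (`fullCount`). Each column sums to `1`, so
the determinant is the sum over `j` of a minor ignoring the label of vertex `j`
(`det_labelMatrix`). Replacing vertex `j` by its reflection (`pivot`) is a fixed-point-free
involution on cells which keeps that minor, so the minors cancel in pairs, and relabelling one
vertex does not change the parity (`fullCount_congr`). An explicit labelling has exactly one fully
labelled cell (`eq_refCell`), so the parity is always odd. Working in the whole lattice hyperplane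
removes all boundary considerations: a cell meeting the outside of the simplex has a coordinate
that is nowhere positive, so that label is missing (`nonneg_of_full`).

The number of players is `n + 2` throughout; a single player is trivial.
-/

open Finset

/-! ### Cells of the Kuhn triangulation -/

/-- The elementary move carrying one unit from coordinate `i - 1` (cyclically) to `i`. -/
def kuhnMove (n : ℕ) (i : Fin (n + 2)) : Fin (n + 2) → ℤ :=
  Pi.single i 1 - Pi.single (i - 1) 1

/-- The player owning a lattice point: `∑ i, x i * i` modulo the number of players. -/
def owner {n : ℕ} (x : Fin (n + 2) → ℤ) : Fin (n + 2) := ∑ i, x i • i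

/-- `s` lists the vertices of a Kuhn cell in the hyperplane `∑ x_i = N`: consecutive vertices,
cyclically, differ by the elementary moves, each used once. The condition on `owner` fixes the
starting point of the cycle, so that a cell is represented by exactly one `s`. -/
structure IsCell {n : ℕ} (N : ℤ) (s : Fin (n + 2) → Fin (n + 2) → ℤ) : Prop where
  step : ∃ σ : Equiv.Perm (Fin (n + 2)), ∀ k, s (k + 1) = s k + kuhnMove n (σ k)
  owner_eq : ∀ k, owner (s k) = k
  sum_eq : ∀ k, ∑ i, s k i = N

/-- The vertices of the neighbouring cell across the facet opposite to vertex `j`. -/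
def pivot {n : ℕ} (j : Fin (n + 2)) (s : Fin (n + 2) → Fin (n + 2) → ℤ) :
    Fin (n + 2) → Fin (n + 2) → ℤ :=
  Function.update s j (s (j - 1) + s (j + 1) - s j)

lemma owner_add {n : ℕ} (x y : Fin (n + 2) → ℤ) : owner (x + y) = owner x + owner y := by
  simp [owner, add_zsmul, sum_add_distrib]

lemma owner_single {n : ℕ} (i : Fin (n + 2)) (a : ℤ) : owner (Pi.single i a) = a • i := by
  unfold owner
  rw [Finset.sum_eq_single i]
  · simp
  · intro b _ hb
    simp [hb]
  · simp

lemma owner_kuhnMove {n : ℕ} (i : Fin (n + 2)) : owner (kuhnMove n i) = 1 := by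
  have h : kuhnMove n i = Pi.single i 1 + Pi.single (i - 1) (-1) := by
    rw [kuhnMove, sub_eq_add_neg, ← Pi.single_neg]
  rw [h, owner_add, owner_single, owner_single]
  simp

lemma sum_kuhnMove {n : ℕ} (i : Fin (n + 2)) : ∑ l, kuhnMove n i l = 0 := by
  simp [kuhnMove]

lemma kuhnMove_injective (n : ℕ) : Function.Injective (kuhnMove n) := by
  intro i j h
  have h1 := congrFun h i
  have h2 : i ≠ i - 1 := Ne.symm (by simp)
  by_contra hij
  simp only [kuhnMove, Pi.sub_apply, Pi.single_apply, if_neg h2, if_neg hij, if_true] at h1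
  split_ifs at h1 <;> omega

/-- Pivoting at `j` exchanges the moves into and out of vertex `j`. -/
lemma IsCell.pivot {n : ℕ} {N : ℤ} {s : Fin (n + 2) → Fin (n + 2) → ℤ} (hs : IsCell N s)
    (j : Fin (n + 2)) : IsCell N (pivot j s) := by
  obtain ⟨⟨σ, hσ⟩, ho, hsum⟩ := hs
  have e1 : s j = s (j - 1) + kuhnMove n (σ (j - 1)) := by
    have := hσ (j - 1)
    rwa [sub_add_cancel] at this
  have e2 := hσ j
  have e3 : s (j - 1) + s (j + 1) - s j = s (j - 1) + kuhnMove n (σ j) := by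
    rw [e2]; abel
  have hj1 : j - 1 ≠ j := by simp
  have hj2 : j + 1 ≠ j := by simp
  unfold _root_.pivot
  rw [e3]
  refine ⟨⟨σ * Equiv.swap (j - 1) j, fun k => ?_⟩, fun k => ?_, fun k => ?_⟩
  · by_cases hk : k = j
    · subst hk
      rw [Function.update_of_ne hj2, Function.update_self]
      simp only [Equiv.Perm.mul_apply, Equiv.swap_apply_right]
      rw [e2, e1]; abel
    · by_cases hk' : k = j - 1
      · subst hk'
        rw [sub_add_cancel, Function.update_self, Function.update_of_ne hj1]
        simp
      · have : k + 1 ≠ j := by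
          intro h; apply hk'; rw [← h]; simp
        rw [Function.update_of_ne this, Function.update_of_ne hk]
        simp only [Equiv.Perm.mul_apply, Equiv.swap_apply_of_ne_of_ne hk' hk]
        exact hσ k
  · by_cases hk : k = j
    · subst hk
      rw [Function.update_self, owner_add, ho, owner_kuhnMove, sub_add_cancel]
    · rw [Function.update_of_ne hk, ho]
  · by_cases hk : k = j
    · subst hk
      rw [Function.update_self]
      simp only [Pi.add_apply, sum_add_distrib, hsum, sum_kuhnMove, add_zero]
    · rw [Function.update_of_ne hk, hsum]

lemma pivot_pivot {n : ℕ} (j : Fin (n + 2)) (s : Fin (n + 2) → Fin (n + 2) → ℤ) :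
    pivot j (pivot j s) = s := by
  have hj1 : j - 1 ≠ j := by simp
  have hj2 : j + 1 ≠ j := by simp
  unfold pivot
  simp only [Function.update_self, Function.update_of_ne hj1, Function.update_of_ne hj2,
    Function.update_idem]
  rw [sub_sub_cancel, Function.update_eq_self]

lemma IsCell.pivot_ne {n : ℕ} {N : ℤ} {s : Fin (n + 2) → Fin (n + 2) → ℤ} (hs : IsCell N s)
    (j : Fin (n + 2)) : _root_.pivot j s ≠ s := by
  obtain ⟨⟨σ, hσ⟩, -, -⟩ := hs
  intro h
  have h1 := congrFun h j
  have e1 : s j = s (j - 1) + kuhnMove n (σ (j - 1)) := by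
    have := hσ (j - 1)
    rwa [sub_add_cancel] at this
  simp only [_root_.pivot, Function.update_self] at h1
  rw [hσ j] at h1
  have h2 : kuhnMove n (σ (j - 1)) = kuhnMove n (σ j) := by
    have h3 : s (j - 1) + kuhnMove n (σ j) = s j := by rw [← h1.trans rfl]; abel
    rw [e1] at h3
    exact (add_left_cancel h3).symm
  have h4 := σ.injective (kuhnMove_injective n h2)
  simp at h4

/-- Each coordinate varies by at most one over a cell, since only the move `i`, used once per turn,
increases coordinate `i`. -/
lemma IsCell.apply_le {n : ℕ} {N : ℤ} {s : Fin (n + 2) → Fin (n + 2) → ℤ} (hs : IsCell N s)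
    (j k i : Fin (n + 2)) : s j i ≤ s k i + 1 := by
  obtain ⟨⟨σ, hσ⟩, -, -⟩ := hs
  have key : ∀ l : ℕ, s (k + Fin.ofNat (n + 2) l) i ≤ s k i +
      (#{r ∈ range l | σ (k + Fin.ofNat (n + 2) r) = i} : ℤ) := by
    intro l
    induction l with
    | zero => simp [Fin.ofNat]
    | succ l ih =>
      have e : k + Fin.ofNat (n + 2) (l + 1) = k + Fin.ofNat (n + 2) l + 1 := by
        rw [add_assoc]; congr 1; ext; simp [Fin.val_add]
      rw [e, hσ, range_add_one, filter_insert]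
      have hm : kuhnMove n (σ (k + Fin.ofNat (n + 2) l)) i ≤
          if σ (k + Fin.ofNat (n + 2) l) = i then 1 else 0 := by
        simp only [kuhnMove, Pi.sub_apply, Pi.single_apply]
        split_ifs <;> omega
      rw [Pi.add_apply]
      split_ifs at hm ⊢ with h
      · rw [card_insert_of_notMem (by simp)]; push_cast; linarith
      · linarith
  have h := key (j - k).val
  have e : k + Fin.ofNat (n + 2) (j - k).val = j := by
    have : Fin.ofNat (n + 2) (j - k).val = j - k := by
      ext; simp only [Fin.val_ofNat]; exact Nat.mod_eq_of_lt (j - k).isLt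
    rw [this]; abel
  rw [e] at h
  have hc : #{r ∈ range (j - k).val | σ (k + Fin.ofNat (n + 2) r) = i} ≤ 1 := by
    rw [card_le_one]
    intro a ha b hb
    simp only [mem_filter, mem_range] at ha hb
    have h1 := add_left_cancel (σ.injective (ha.2.trans hb.2.symm))
    have h2 := congrArg Fin.val h1
    have := (j - k).isLt
    simp only [Fin.val_ofNat] at h2
    rwa [Nat.mod_eq_of_lt (by omega), Nat.mod_eq_of_lt (by omega)] at h2
  have : (#{r ∈ range (j - k).val | σ (k + Fin.ofNat (n + 2) r) = i} : ℤ) ≤ 1 := by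
    exact_mod_cast hc
  linarith

/-! ### Determinants of label matrices modulo 2 -/

/-- The matrix over `ZMod 2` whose `j`-th column is the basis vector `f j`. -/
def labelMatrix {n : ℕ} (f : Fin (n + 2) → Fin (n + 2)) :
    Matrix (Fin (n + 2)) (Fin (n + 2)) (ZMod 2) :=
  Matrix.of fun i j => if f j = i then 1 else 0

/-- The minor of the label matrix omitting row `0` and column `j`, a function of the labels on the
facet opposite to vertex `j`. -/
def facetWeight {n : ℕ} (f : Fin (n + 2) → Fin (n + 2)) (j : Fin (n + 2)) : ZMod 2 :=
  ((labelMatrix f).submatrix (Fin.succAbove 0) j.succAbove).det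

/-- The sum of all rows is the constant row `1`; put it in place of row `0` and expand along it. -/
lemma det_labelMatrix {n : ℕ} (f : Fin (n + 2) → Fin (n + 2)) :
    (labelMatrix f).det = ∑ j, facetWeight f j := by
  have h := Matrix.det_updateRow_sum (labelMatrix f) 0 (fun _ => 1)
  rw [one_smul] at h
  have hrow : (∑ k, (1 : ZMod 2) • labelMatrix f k) = fun _ => 1 := by
    ext j
    rw [Finset.sum_apply]
    simp [labelMatrix]
  rw [hrow] at h
  rw [← h, Matrix.det_succ_row _ 0]
  refine sum_congr rfl fun j _ => ?_
  have hsgn : ((-1 : ZMod 2)) ^ ((0 : Fin (n + 2)).val + j.val) = 1 := by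
    have : (-1 : ZMod 2) = 1 := by decide
    rw [this, one_pow]
  rw [hsgn, Matrix.updateRow_self, one_mul, one_mul, facetWeight]
  congr 1

lemma facetWeight_congr {n : ℕ} {f g : Fin (n + 2) → Fin (n + 2)} {j : Fin (n + 2)}
    (h : ∀ k, k ≠ j → f k = g k) : facetWeight f j = facetWeight g j := by
  unfold facetWeight
  congr 1
  ext a b
  simp [labelMatrix, h _ (Fin.succAbove_ne j b)]

lemma surjective_of_det_ne_zero {n : ℕ} {f : Fin (n + 2) → Fin (n + 2)}
    (h : (labelMatrix f).det ≠ 0) : Function.Surjective f := by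
  intro i
  by_contra hi
  push Not at hi
  exact h (Matrix.det_eq_zero_of_row_eq_zero i fun j => by simp [labelMatrix, hi j])

lemma det_ne_zero_of_bijective {n : ℕ} {f : Fin (n + 2) → Fin (n + 2)}
    (h : Function.Bijective f) : (labelMatrix f).det ≠ 0 := by
  have e : labelMatrix f = (1 : Matrix _ _ (ZMod 2)).submatrix id (Equiv.ofBijective f h) := by
    ext a b
    simp [labelMatrix, Matrix.one_apply, eq_comm]
  rw [e, Matrix.det_permute', Matrix.det_one, mul_one]
  rcases Int.units_eq_one_or (Equiv.Perm.sign (Equiv.ofBijective f h)) with h | h <;> rw [h] <;> decide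

/-! ### Parity of the number of fully labelled cells -/

open Classical in
/-- The cells with all coordinates between `-1` and `N + 1`. The margin of one makes this finite
set contain every cell having a vertex in `[0, N]^d`. -/
noncomputable def cells (n : ℕ) (N : ℤ) : Finset (Fin (n + 2) → Fin (n + 2) → ℤ) :=
  {s ∈ Fintype.piFinset fun _ => Fintype.piFinset fun _ => Icc (-1) (N + 1) | IsCell N s}

lemma mem_cells {n : ℕ} {N : ℤ} {s : Fin (n + 2) → Fin (n + 2) → ℤ} :
    s ∈ cells n N ↔ (∀ k i, -1 ≤ s k i ∧ s k i ≤ N + 1) ∧ IsCell N s := by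
  simp [cells, Fintype.mem_piFinset]

lemma IsCell.mem_cells {n : ℕ} {N : ℤ} {s : Fin (n + 2) → Fin (n + 2) → ℤ} (hs : IsCell N s)
    {k : Fin (n + 2)} (hk : ∀ i, 0 ≤ s k i ∧ s k i ≤ N) : s ∈ cells n N := by
  refine _root_.mem_cells.2 ⟨fun j i => ?_, hs⟩
  have h1 := hs.apply_le j k i
  have h2 := hs.apply_le k j i
  have := hk i
  constructor <;> linarith

/-- The number, modulo `2`, of cells on which the labelling `L` takes all values. -/
noncomputable def fullCount (n : ℕ) (N : ℤ) (L : (Fin (n + 2) → ℤ) → Fin (n + 2)) : ZMod 2 :=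
  ∑ s ∈ cells n N, (labelMatrix fun k => L (s k)).det

/-- Over the cells with `k`-th vertex `w`, only the facets opposite to `w` contribute: the minors
of the facets opposite to another vertex `j` cancel in pairs under `pivot j`. -/
lemma sum_det_star {n : ℕ} {N : ℤ} (L : (Fin (n + 2) → ℤ) → Fin (n + 2))
    {w : Fin (n + 2) → ℤ} (hw : ∀ i, 0 ≤ w i ∧ w i ≤ N) (k : Fin (n + 2)) :
    ∑ s ∈ cells n N with s k = w, (labelMatrix fun j => L (s j)).det =
      ∑ s ∈ cells n N with s k = w, facetWeight (fun j => L (s j)) k := by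
  simp_rw [det_labelMatrix]
  rw [sum_comm, Finset.sum_eq_single k _ (by simp)]
  intro j _ hjk
  refine Finset.sum_involution (fun s _ => pivot j s) ?_ ?_ ?_ ?_
  · intro s _
    have : facetWeight (fun i => L (pivot j s i)) j = facetWeight (fun i => L (s i)) j :=
      facetWeight_congr fun i hi => by simp [pivot, Function.update_of_ne hi]
    rw [this]
    exact CharTwo.add_self_eq_zero _
  · intro s hs _
    exact (mem_cells.1 (mem_filter.1 hs).1).2.pivot_ne j
  · intro s hs
    obtain ⟨h1, h2⟩ := mem_filter.1 hs
    have e : pivot j s k = w := by rw [pivot, Function.update_of_ne hjk.symm, h2]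
    refine mem_filter.2 ⟨((mem_cells.1 h1).2.pivot j).mem_cells (k := k) ?_, e⟩
    rw [e]; exact hw
  · intro s _
    exact pivot_pivot j s

/-- Changing the label of a single vertex keeps the parity. -/
lemma fullCount_congr {n : ℕ} {N : ℤ} {L L' : (Fin (n + 2) → ℤ) → Fin (n + 2)}
    {w : Fin (n + 2) → ℤ} (hw : ∀ i, 0 ≤ w i ∧ w i ≤ N) (h : ∀ x, x ≠ w → L x = L' x) :
    fullCount n N L = fullCount n N L' := by
  unfold fullCount
  rw [← sum_filter_add_sum_filter_not (cells n N) (fun s => s (owner w) = w)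
      fun s => (labelMatrix fun k => L (s k)).det,
    ← sum_filter_add_sum_filter_not (cells n N) (fun s => s (owner w) = w)
      fun s => (labelMatrix fun k => L' (s k)).det, sum_det_star L hw, sum_det_star L' hw]
  have aux : ∀ s ∈ cells n N, ∀ j, s j = w → j = owner w := by
    intro s hs j hj
    rw [← hj, (mem_cells.1 hs).2.owner_eq]
  congr 1
  · refine sum_congr rfl fun s hs => facetWeight_congr fun j hj => h _ fun hjw => hj ?_
    exact aux s (mem_filter.1 hs).1 j hjw
  · refine sum_congr rfl fun s hs => ?_
    obtain ⟨h1, h2⟩ := mem_filter.1 hs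
    congr 2
    funext j
    refine h _ fun hjw => h2 ?_
    rw [← aux s h1 j hjw, hjw]

/-- If labels always point to positive coordinates, a fully labelled cell lies in the simplex: the
vertex labelled `i` has positive `i`-th coordinate, and the other vertices differ by at most one. -/
lemma nonneg_of_full {n : ℕ} {N : ℤ} {L : (Fin (n + 2) → ℤ) → Fin (n + 2)}
    (hL : ∀ x : Fin (n + 2) → ℤ, ∑ i, x i = N → 0 < x (L x)) {s : Fin (n + 2) → Fin (n + 2) → ℤ}
    (hs : IsCell N s) (hfull : Function.Surjective fun k => L (s k)) (k i : Fin (n + 2)) :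
    0 ≤ s k i := by
  obtain ⟨j, hj⟩ := hfull i
  have h1 := hL (s j) (hs.sum_eq j)
  have h2 := hs.apply_le j k i
  simp only at hj
  rw [hj] at h1
  linarith

/-! ### A labelling with exactly one fully labelled cell -/

open Classical in
/-- The reference labelling: some positive coordinate other than the last one `-1`, if there is
one, and `-1` otherwise. -/
noncomputable def refLabel {n : ℕ} (x : Fin (n + 2) → ℤ) : Fin (n + 2) :=
  if h : ∃ i, i ≠ -1 ∧ 0 < x i then h.choose else -1

lemma refLabel_pos {n : ℕ} {N : ℤ} (hN : 1 ≤ N) (x : Fin (n + 2) → ℤ) (hx : ∑ i, x i = N) :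
    0 < x (refLabel x) := by
  unfold refLabel
  split_ifs with h
  · exact h.choose_spec.2
  · push Not at h
    rw [← add_sum_erase _ _ (mem_univ (-1))] at hx
    have : ∑ i ∈ univ.erase (-1), x i ≤ 0 := sum_nonpos fun i hi => h i (ne_of_mem_erase hi)
    linarith

/-- The only cell fully labelled by `refLabel`, with vertices `e_i + (N - 1) e_{-1}`. The shift in
the index is forced by the owner of the vertex `N e_{-1}`, which is `-N`. -/
def refCell (n : ℕ) (N : ℤ) (j : Fin (n + 2)) : Fin (n + 2) → ℤ :=
  Pi.single (j - N • (-1) - 1) 1 + Pi.single (-1) (N - 1)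

lemma refLabel_refCell {n : ℕ} {N : ℤ} (j : Fin (n + 2)) :
    refLabel (refCell n N j) = j - N • (-1) - 1 := by
  unfold refLabel
  split_ifs with h
  · have huniq : ∀ i, i ≠ -1 → 0 < refCell n N j i → i = j - N • (-1) - 1 := by
      intro i h1 h2
      by_contra h3
      rw [refCell, Pi.add_apply, Pi.single_eq_of_ne h3, Pi.single_eq_of_ne h1] at h2
      simp at h2
    exact huniq _ h.choose_spec.1 h.choose_spec.2
  · by_contra h3
    refine h ⟨j - N • (-1) - 1, fun h4 => h3 h4.symm, ?_⟩
    simp only [refCell, Pi.add_apply, Pi.single_apply, if_neg (Ne.symm h3)]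
    simp

lemma isCell_refCell (n : ℕ) (N : ℤ) : IsCell N (refCell n N) := by
  refine ⟨⟨Equiv.subRight (N • (-1)), fun k => ?_⟩, fun k => ?_, fun k => ?_⟩
  · have : k + 1 - N • (-1) - 1 = k - N • (-1) := by abel
    simp only [refCell, this, kuhnMove, Equiv.subRight_apply]
    abel
  · rw [refCell, owner_add, owner_single, owner_single, sub_zsmul, one_zsmul, one_zsmul]
    abel
  · simp [refCell, sum_add_distrib]

/-- The vertex labelled `-1` must be `N e_{-1}`, and as all coordinates stay nonnegative, each
further move is forced. -/
lemma eq_refCell {n : ℕ} {N : ℤ} (hN : 1 ≤ N) {s : Fin (n + 2) → Fin (n + 2) → ℤ}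
    (hs : IsCell N s) (hfull : Function.Surjective fun k => refLabel (s k)) : s = refCell n N := by
  have hnn := nonneg_of_full (refLabel_pos hN) hs hfull
  obtain ⟨p, hp⟩ := hfull (-1)
  have hsp : s p = Pi.single (-1) N := by
    have hz : ∀ i, i ≠ -1 → s p i = 0 := by
      intro i hi
      by_contra hne
      have hex : ∃ i, i ≠ -1 ∧ 0 < s p i := ⟨i, hi, lt_of_le_of_ne (hnn p i) (Ne.symm hne)⟩
      simp only [refLabel, dif_pos hex] at hp
      exact hex.choose_spec.1 hp
    have hsum := hs.sum_eq p
    rw [Finset.sum_eq_single (-1) (fun i _ hi => hz i hi) (by simp)] at hsum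
    ext i
    by_cases hi : i = -1
    · subst hi; simp [hsum]
    · simp [hi, hz i hi]
  have hpo : p = N • (-1) := by
    rw [← hs.owner_eq p, hsp, owner_single]
  obtain ⟨⟨σ, hσ⟩, -, -⟩ := hs
  have hmove : ∀ k, 0 < s k (σ k - 1) := by
    intro k
    have h1 := hnn (k + 1) (σ k - 1)
    rw [hσ k] at h1
    have : σ k - 1 ≠ σ k := by simp
    simp only [Pi.add_apply, kuhnMove, Pi.sub_apply, Pi.single_eq_same,
      Pi.single_eq_of_ne this] at h1
    linarith
  have key : ∀ r : ℕ, s (p + r • 1) = refCell n N (p + r • 1) ∧ σ (p + r • 1) = r • 1 := by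
    have hsig : ∀ r : ℕ, (r • (1 : Fin (n + 2)) ≠ 0 → σ p = 0) →
        s (p + r • 1) = refCell n N (p + r • 1) → σ (p + r • 1) = r • 1 := by
      intro r h0 hr
      have h1 := hmove (p + r • 1)
      rw [hr, refCell, ← hpo, add_sub_cancel_left] at h1
      by_contra hne
      have hne' : σ (p + r • 1) - 1 ≠ r • 1 - 1 := fun h => hne (sub_left_injective h)
      simp only [Pi.add_apply, Pi.single_eq_of_ne hne', zero_add] at h1
      have h2 : σ (p + r • 1) - 1 = -1 := by
        by_contra h3
        simp [Pi.single_eq_of_ne h3] at h1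
      have h3 : σ (p + r • 1) = 0 := by
        rw [sub_eq_iff_eq_add] at h2
        rw [h2]; simp
      rw [h3] at hne
      have h4 := σ.injective (h3.trans (h0 (Ne.symm hne)).symm)
      exact hne (by simpa [eq_comm] using h4)
    intro r
    have hbase : s (p + 0 • 1) = refCell n N (p + 0 • 1) := by
      rw [zero_nsmul, add_zero, hsp, refCell, ← hpo, sub_self, zero_sub, ← Pi.single_add]
      congr 1; ring
    have hσp : σ p = 0 := by
      have := hsig 0 (fun h => absurd (zero_nsmul _) h) hbase
      simpa using this
    induction r with
    | zero => exact ⟨hbase, hsig 0 (fun _ => hσp) hbase⟩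
    | succ r ih =>
      have e : s (p + (r + 1) • 1) = refCell n N (p + (r + 1) • 1) := by
        rw [succ_nsmul, ← add_assoc, hσ, ih.1, ih.2, refCell, refCell, ← hpo, kuhnMove]
        have e1 : p + r • 1 - p - 1 = r • 1 - (1 : Fin (n + 2)) := by abel
        have e2 : p + r • 1 + 1 - p - 1 = r • (1 : Fin (n + 2)) := by abel
        rw [e1, e2]; abel
      exact ⟨e, hsig _ (fun _ => hσp) e⟩
  funext j
  have h := (key (j - p).val).1
  have e : (j - p).val • (1 : Fin (n + 2)) = j - p := by
    have hl : ∀ l : ℕ, l • (1 : Fin (n + 2)) = Fin.ofNat (n + 2) l := by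
      intro l
      induction l with
      | zero => simp [Fin.ofNat]
      | succ l ih => rw [succ_nsmul, ih]; ext; simp [Fin.val_add]
    rw [hl]
    ext
    simp only [Fin.val_ofNat]
    exact Nat.mod_eq_of_lt (j - p).isLt
  rw [e] at h
  simpa using h

lemma fullCount_refLabel {n : ℕ} {N : ℤ} (hN : 1 ≤ N) : fullCount n N refLabel ≠ 0 := by
  unfold fullCount
  rw [Finset.sum_eq_single (refCell n N)]
  · apply det_ne_zero_of_bijective
    simp only [refLabel_refCell, sub_sub]
    exact (Equiv.subRight (N • (-1) + 1 : Fin (n + 2))).bijective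
  · intro s hs hne
    by_contra h
    exact hne (eq_refCell hN (mem_cells.1 hs).2 (surjective_of_det_ne_zero h))
  · intro h
    refine absurd ((isCell_refCell n N).mem_cells (k := N • (-1)) fun i => ?_) h
    simp only [refCell, Pi.add_apply, sub_self, zero_sub, Pi.single_apply]
    split_ifs <;> constructor <;> linarith

/-- Sperner's lemma for the Kuhn triangulation. -/
theorem sperner_kuhn {n : ℕ} {N : ℤ} (hN : 1 ≤ N) (L : (Fin (n + 2) → ℤ) → Fin (n + 2))
    (hL : ∀ x : Fin (n + 2) → ℤ, (∀ i, 0 ≤ x i) → ∑ i, x i = N → 0 < x (L x)) :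
    ∃ s, IsCell N s ∧ (∀ k i, 0 ≤ s k i) ∧ Function.Bijective fun k => L (s k) := by
  classical
  -- `L` on `S` and `refLabel` elsewhere: relabel the points of the simplex one at a time
  let mix (S : Finset (Fin (n + 2) → ℤ)) (x : Fin (n + 2) → ℤ) : Fin (n + 2) :=
    if x ∈ S then L x else refLabel x
  have hcount : ∀ S : Finset (Fin (n + 2) → ℤ), (∀ x ∈ S, ∀ i, 0 ≤ x i ∧ x i ≤ N) →
      fullCount n N (mix S) = fullCount n N refLabel := by
    intro S
    induction S using Finset.induction_on with
    | empty => intro _; congr 1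
    | insert w S _ ih =>
      intro hS
      rw [← ih fun x hx => hS x (mem_insert_of_mem hx)]
      refine fullCount_congr (hS w (mem_insert_self _ _)) fun x hx => ?_
      simp [mix, mem_insert, hx]
  let B : Finset (Fin (n + 2) → ℤ) := Fintype.piFinset fun _ => Icc 0 N
  have hB : ∀ x, x ∈ B ↔ ∀ i, 0 ≤ x i ∧ x i ≤ N := by
    intro x; simp [B, Fintype.mem_piFinset]
  have hne := fullCount_refLabel (n := n) hN
  rw [← hcount B fun x hx => (hB x).1 hx] at hne
  obtain ⟨s, hs, hdet⟩ := exists_ne_zero_of_sum_ne_zero hne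
  have hsurj := surjective_of_det_ne_zero hdet
  have hcell := (mem_cells.1 hs).2
  have hnn := nonneg_of_full (L := mix B) (N := N) (fun x hx => by
    simp only [mix]
    split_ifs with h
    · exact hL x (fun i => ((hB x).1 h i).1) hx
    · exact refLabel_pos hN x hx) hcell hsurj
  refine ⟨s, hcell, hnn, ?_⟩
  have e : (fun k => L (s k)) = fun k => mix B (s k) := by
    funext k
    have : s k ∈ B := (hB _).2 fun i => ⟨hnn k i, by
      rw [← hcell.sum_eq k]
      exact single_le_sum (f := s k) (fun i _ => hnn k i) (mem_univ i)⟩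
    simp [mix, this]
  rw [e]
  exact Finite.surjective_iff_bijective.1 hsurj

/-! ### Cuts, approximate solutions and the limit -/

/-- The value, for the utility `u`, of the `k`-th piece of the cut `x`. -/
noncomputable def pieceValue {d : ℕ} (u : ℝ → ℝ → ℝ) (k : Fin d) (x : Fin d → ℝ) : ℝ :=
  u (∑ j ∈ Finset.Iio k, x j) (∑ j ∈ Finset.Iic k, x j)

lemma sum_Iic_eq_add {d : ℕ} (x : Fin d → ℝ) (k : Fin d) :
    ∑ j ∈ Finset.Iic k, x j = (∑ j ∈ Finset.Iio k, x j) + x k := by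
  rw [← Finset.Iio_insert, Finset.sum_insert (by simp), add_comm]

lemma piece_bounds {d : ℕ} {x : Fin d → ℝ} (hx : x ∈ stdSimplex ℝ (Fin d)) (k : Fin d) :
    0 ≤ ∑ j ∈ Finset.Iio k, x j ∧ ∑ j ∈ Finset.Iio k, x j ≤ ∑ j ∈ Finset.Iic k, x j ∧
      ∑ j ∈ Finset.Iic k, x j ≤ 1 := by
  refine ⟨sum_nonneg fun j _ => hx.1 j, ?_, ?_⟩
  · rw [sum_Iic_eq_add]; linarith [hx.1 k]
  · rw [← hx.2]
    exact sum_le_sum_of_subset_of_nonneg (subset_univ _) fun j _ _ => hx.1 j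

lemma abs_sum_sub_le {d : ℕ} {x y : Fin d → ℝ} {δ : ℝ} (hδ : 0 ≤ δ)
    (h : ∀ j, |x j - y j| ≤ δ) (S : Finset (Fin d)) :
    |∑ j ∈ S, x j - ∑ j ∈ S, y j| ≤ d * δ := by
  rw [← sum_sub_distrib]
  calc |∑ j ∈ S, (x j - y j)| ≤ ∑ j ∈ S, |x j - y j| := abs_sum_le_sum_abs _ _
    _ ≤ ∑ j ∈ S, δ := sum_le_sum fun j _ => h j
    _ = #S * δ := by simp
    _ ≤ d * δ := by
      gcongr
      simpa using card_le_univ S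

lemma abs_pieceValue_sub_le {d : ℕ} {K : ℝ} {u : ℝ → ℝ → ℝ}
    (hlip : ∀ a b a' b' : ℝ, 0 ≤ a → a ≤ b → b ≤ 1 → 0 ≤ a' → a' ≤ b' → b' ≤ 1 →
      |u a b - u a' b'| ≤ K * (|a - a'| + |b - b'|))
    {x y : Fin d → ℝ} (hx : x ∈ stdSimplex ℝ (Fin d)) (hy : y ∈ stdSimplex ℝ (Fin d))
    {δ : ℝ} (hδ : 0 ≤ δ) (h : ∀ j, |x j - y j| ≤ δ) (k : Fin d) :
    |pieceValue u k x - pieceValue u k y| ≤ |K| * (2 * d) * δ := by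
  obtain ⟨h1, h2, h3⟩ := piece_bounds hx k
  obtain ⟨h4, h5, h6⟩ := piece_bounds hy k
  refine (hlip _ _ _ _ h1 h2 h3 h4 h5 h6).trans ?_
  have e1 := abs_sum_sub_le hδ h (Iio k)
  have e2 := abs_sum_sub_le hδ h (Iic k)
  calc K * _ ≤ |K| * (|∑ j ∈ Iio k, x j - ∑ j ∈ Iio k, y j| +
        |∑ j ∈ Iic k, x j - ∑ j ∈ Iic k, y j|) := by
        gcongr
        exact le_abs_self K
    _ ≤ |K| * (d * δ + d * δ) := by gcongr
    _ = _ := by ring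

lemma tendsto_pieceValue {d : ℕ} {K : ℝ} {u : ℝ → ℝ → ℝ}
    (hlip : ∀ a b a' b' : ℝ, 0 ≤ a → a ≤ b → b ≤ 1 → 0 ≤ a' → a' ≤ b' → b' ≤ 1 →
      |u a b - u a' b'| ≤ K * (|a - a'| + |b - b'|))
    {x : ℕ → Fin d → ℝ} {y : Fin d → ℝ} (hx : ∀ m, x m ∈ stdSimplex ℝ (Fin d))
    (hy : y ∈ stdSimplex ℝ (Fin d)) (h : Filter.Tendsto x Filter.atTop (nhds y)) (k : Fin d) :
    Filter.Tendsto (fun m => pieceValue u k (x m)) Filter.atTop (nhds (pieceValue u k y)) := by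
  rw [tendsto_iff_dist_tendsto_zero] at h ⊢
  refine squeeze_zero (fun _ => dist_nonneg) (fun m => ?_)
    (by simpa using h.const_mul (|K| * (2 * d)))
  rw [Real.dist_eq]
  refine abs_pieceValue_sub_le hlip (hx m) hy dist_nonneg (fun j => ?_) k
  rw [← Real.dist_eq]
  exact dist_le_pi_dist _ _ _

/-- Envy-freeness up to an error proportional to the mesh `1 / (m + 1)`. -/
lemma exists_approx_envy_free {n : ℕ} {K : ℝ} {u : Fin (n + 2) → ℝ → ℝ → ℝ}
    (hdeg : ∀ (i : Fin (n + 2)) (a : ℝ), 0 ≤ a → a ≤ 1 → u i a a = 0)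
    (hpos : ∀ (i : Fin (n + 2)) (a b : ℝ), 0 ≤ a → a < b → b ≤ 1 → 0 < u i a b)
    (hlip : ∀ (i : Fin (n + 2)) (a b a' b' : ℝ), 0 ≤ a → a ≤ b → b ≤ 1 →
      0 ≤ a' → a' ≤ b' → b' ≤ 1 →
      |u i a b - u i a' b'| ≤ K * (|a - a'| + |b - b'|)) (m : ℕ) :
    ∃ x ∈ stdSimplex ℝ (Fin (n + 2)), ∃ π : Equiv.Perm (Fin (n + 2)), ∀ i k,
      pieceValue (u i) k x ≤ pieceValue (u i) (π i) x +
        2 * (|K| * (2 * ((n + 2 : ℕ) : ℝ))) * (1 / ((m : ℝ) + 1)) := by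
  let cut (z : Fin (n + 2) → ℤ) (i : Fin (n + 2)) : ℝ := z i / ((m : ℝ) + 1)
  have hm : (0 : ℝ) < (m : ℝ) + 1 := by positivity
  have hcut : ∀ z : Fin (n + 2) → ℤ, (∀ i, 0 ≤ z i) → ∑ i, z i = (m : ℤ) + 1 →
      cut z ∈ stdSimplex ℝ (Fin (n + 2)) := by
    intro z hz hsum
    refine ⟨fun i => div_nonneg (by exact_mod_cast hz i) hm.le, ?_⟩
    simp only [cut]
    rw [← sum_div, div_eq_one_iff_eq hm.ne']
    exact_mod_cast hsum
  have hmax : ∀ z : Fin (n + 2) → ℤ, ∃ l, ∀ k,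
      pieceValue (u (owner z)) k (cut z) ≤ pieceValue (u (owner z)) l (cut z) := fun z =>
    Finite.exists_max fun k => pieceValue (u (owner z)) k (cut z)
  choose L hL using hmax
  have hproper : ∀ z : Fin (n + 2) → ℤ, (∀ i, 0 ≤ z i) → ∑ i, z i = (m : ℤ) + 1 →
      0 < z (L z) := by
    intro z hz hsum
    have hc := hcut z hz hsum
    by_contra hneg
    have hz0 : cut z (L z) = 0 := by
      have : z (L z) = 0 := le_antisymm (not_lt.1 hneg) (hz _)
      simp [cut, this]
    obtain ⟨k, -, hk⟩ : ∃ k ∈ univ, 0 < z k := by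
      by_contra hno
      push Not at hno
      have := sum_nonpos hno
      omega
    have hk' : 0 < cut z k := div_pos (by exact_mod_cast hk) hm
    have h1 := hL z k
    obtain ⟨a1, a2, a3⟩ := piece_bounds hc k
    obtain ⟨b1, b2, b3⟩ := piece_bounds hc (L z)
    have h2 : 0 < pieceValue (u (owner z)) k (cut z) :=
      hpos _ _ _ a1 (by rw [sum_Iic_eq_add]; linarith) a3
    have h3 : pieceValue (u (owner z)) (L z) (cut z) = 0 := by
      rw [pieceValue, sum_Iic_eq_add, hz0, add_zero]
      exact hdeg _ _ b1 (b2.trans b3)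
    linarith
  obtain ⟨s, hs, hnn, hbij⟩ := sperner_kuhn (N := (m : ℤ) + 1) (by omega) L hproper
  refine ⟨cut (s 0), hcut _ (hnn 0) (hs.sum_eq 0), Equiv.ofBijective _ hbij, fun i k => ?_⟩
  have hclose : ∀ j, |cut (s 0) j - cut (s i) j| ≤ 1 / ((m : ℝ) + 1) := by
    intro j
    simp only [cut]
    rw [← sub_div, abs_div, abs_of_pos hm]
    gcongr
    have h1 : (s 0 j : ℝ) ≤ s i j + 1 := by exact_mod_cast hs.apply_le 0 i j
    have h2 : (s i j : ℝ) ≤ s 0 j + 1 := by exact_mod_cast hs.apply_le i 0 j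
    rw [abs_le]
    constructor <;> linarith
  have hlip' := abs_pieceValue_sub_le (hlip i) (hcut _ (hnn 0) (hs.sum_eq 0))
    (hcut _ (hnn i) (hs.sum_eq i)) (by positivity) hclose
  have h1 := abs_le.1 (hlip' k)
  have h2 := abs_le.1 (hlip' (L (s i)))
  have h3 := hL (s i) k
  rw [hs.owner_eq i] at h3
  simp only [Equiv.ofBijective_apply]
  linarith [h1.1, h1.2, h2.1, h2.2]

/-- Stromquist's envy-free cake-cutting theorem: if each player's utility function on
subintervals of `[0,1]` vanishes on degenerate intervals, is positive on nondegenerate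
intervals, and is `K`-Lipschitz in the endpoints, then there is a cut `x ∈ Δ_{d-1}` and an
assignment `π` of pieces to players such that every player weakly prefers her own piece
`I_{π(i)}(x)` to every piece `I_k(x)`. Here `u i a b` denotes the utility of player `i` for
the piece `[a,b]`, and the `k`-th piece of the cut `x` is
`I_k(x) = [∑_{j<k} x_j, ∑_{j≤k} x_j]`. -/
theorem stromquist_envy_free (d : ℕ) (hd : 1 ≤ d) (K : ℝ) (u : Fin d → ℝ → ℝ → ℝ)
    (hdeg : ∀ (i : Fin d) (a : ℝ), 0 ≤ a → a ≤ 1 → u i a a = 0)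
    (hpos : ∀ (i : Fin d) (a b : ℝ), 0 ≤ a → a < b → b ≤ 1 → 0 < u i a b)
    (hlip : ∀ (i : Fin d) (a b a' b' : ℝ), 0 ≤ a → a ≤ b → b ≤ 1 →
      0 ≤ a' → a' ≤ b' → b' ≤ 1 →
      |u i a b - u i a' b'| ≤ K * (|a - a'| + |b - b'|)) :
    ∃ x ∈ stdSimplex ℝ (Fin d), ∃ π : Equiv.Perm (Fin d),
      ∀ i k : Fin d,
        u i (∑ j ∈ Finset.Iio k, x j) (∑ j ∈ Finset.Iic k, x j) ≤
          u i (∑ j ∈ Finset.Iio (π i), x j) (∑ j ∈ Finset.Iic (π i), x j) := by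

  obtain _ | _ | n := d
  · omega
  · refine ⟨fun _ => 1, ⟨fun _ => zero_le_one, by simp⟩, 1, fun i k => ?_⟩
    rw [Fin.fin_one_eq_zero k, Fin.fin_one_eq_zero ((1 : Equiv.Perm (Fin 1)) i)]
  change ∃ x ∈ stdSimplex ℝ (Fin (n + 2)), ∃ π : Equiv.Perm (Fin (n + 2)),
    ∀ i k, pieceValue (u i) k x ≤ pieceValue (u i) (π i) x
  choose x hx π hπ using exists_approx_envy_free hdeg hpos hlip
  obtain ⟨y, hy, φ, hφ, hlim⟩ := (isCompact_stdSimplex ℝ (Fin (n + 2))).tendsto_subseq hx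
  obtain ⟨τ, hτ⟩ : ∃ τ, ∃ᶠ m in Filter.atTop, π (φ m) = τ :=
    Filter.frequently_exists.1 (Filter.Frequently.of_forall fun m => ⟨_, rfl⟩)
  refine ⟨y, hy, τ, fun i k => ?_⟩
  have herr : Filter.Tendsto (fun m => 2 * (|K| * (2 * ((n + 2 : ℕ) : ℝ))) *
      (1 / ((φ m : ℝ) + 1))) Filter.atTop (nhds 0) := by
    simpa using (tendsto_one_div_add_atTop_nhds_zero_nat.comp hφ.tendsto_atTop).const_mul
      (2 * (|K| * (2 * ((n + 2 : ℕ) : ℝ))))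
  have hval := fun l => tendsto_pieceValue (hlip i) (fun m => hx (φ m)) hy hlim l
  have hdiff := ((hval (τ i)).add herr).sub (hval k)
  rw [add_zero] at hdiff
  refine sub_nonneg.1 (ge_of_tendsto_of_frequently hdiff (hτ.mono fun m hm => ?_))
  have := hπ (φ m) i k
  rw [hm] at this
  linarith
end
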